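/- Conservation of energy for the regularized Chern–Simons–Schrödinger equation: let β ∈ ℝ and R > 0, and let u : ℝ × ℝ² → ℂ be jointly smooth with u(t,·) Schwartz for every t (and t ↦ u(t,·) smooth into Schwartz space). Set A(t,·) := K_R ∗ |u(t,·)|² (an ℝ²-valued function) and suppose that for all (t,x): i ∂ₜ u(t,x) = −Δu(t,x) − 2iβ A(t,x)·∇u(t,x) + β² ‖A(t,x)‖² u(t,x) − β ( K_R ∗ ( 2β A(t,·)|u(t,·)|² + J[u(t,·)] ) )(x) u(t,x), where the last convolution of the vector kernel K_R with a vector field is the scalar obtained by summing the componentwise convolutions. Then the energy E(t) := ∫_{ℝ²} ‖ −i∇u(t,x) + β A(t,x) u(t,x) ‖² dx is constant in t. -/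

import Mathlib

noncomputable section
open MeasureTheory ENNReal
open scoped RealInnerProductSpace

/-- The plane `ℝ²`. -/
abbrev E2 : Type := EuclideanSpace ℝ (Fin 2)

/-- The rotation by 90 degrees: `x^⊥ = (-x₂, x₁)`. -/
def perp (x : E2) : E2 := (WithLp.equiv 2 (Fin 2 → ℝ)).symm ![-(x 1), x 0]

/-- The Aharonov–Bohm kernel `K_R(x) = x^⊥ / (max R ‖x‖)²` (with `K_R 0 = 0`,
also when `R = 0`, by the junk-value convention `(0 : ℝ)⁻¹ = 0`). -/
def K (R : ℝ) (x : E2) : E2 := ((max R ‖x‖) ^ 2)⁻¹ • perp x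

/-- The standard basis of `ℝ²`. -/
def e2 (j : Fin 2) : E2 := EuclideanSpace.single j 1

/-- Componentwise convolution of the vector kernel `K_R` with a scalar density. -/
def convKs (R : ℝ) (ρ : E2 → ℝ) (x : E2) : E2 := ∫ y, ρ y • K R (x - y)

/-- Convolution of the vector kernel `K_R` with a vector field, summed over components. -/
def convKv (R : ℝ) (F : E2 → E2) (x : E2) : ℝ := ∫ y, ⟪K R (x - y), F y⟫

/-- The current `J[u] = i(u∇ū - ū∇u) = 2 Im(ū ∇u)`, an `ℝ²`-valued function. -/
def Jf (u : E2 → ℂ) (x : E2) : E2 :=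
  (WithLp.equiv 2 (Fin 2 → ℝ)).symm fun j =>
    2 * ((starRingEnd ℂ) (u x) * fderiv ℝ u x (e2 j)).im

/-- The `H¹` norm `(‖u‖₂² + ‖∇u‖₂²)^{1/2}` (extended-real valued). -/
def H1 (u : E2 → ℂ) : ℝ≥0∞ :=
  (eLpNorm u 2 volume ^ 2 + eLpNorm (fun x => fderiv ℝ u x) 2 volume ^ 2) ^ (1 / 2 : ℝ)

/-- The `H²` norm `(‖u‖₂² + ‖∇u‖₂² + ‖∇²u‖₂²)^{1/2}` (extended-real valued). -/
def H2 (u : E2 → ℂ) : ℝ≥0∞ :=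
  (eLpNorm u 2 volume ^ 2 + eLpNorm (fun x => fderiv ℝ u x) 2 volume ^ 2
    + eLpNorm (fun x => fderiv ℝ (fderiv ℝ u) x) 2 volume ^ 2) ^ (1 / 2 : ℝ)

/-- The magnetic potential `A^R[|u|²] = K_R ∗ |u|²`. -/
def Apot (R : ℝ) (u : E2 → ℂ) (x : E2) : E2 := convKs R (fun y => ‖u y‖ ^ 2) x

/-- Laplacian of a complex function on `ℝ²`. -/
def lap (u : E2 → ℂ) (x : E2) : ℂ :=
  ∑ j : Fin 2, fderiv ℝ (fun y => fderiv ℝ u y (e2 j)) x (e2 j)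

/-- Right-hand side of the regularized Chern–Simons–Schrödinger equation
`i∂ₜu = -Δu - 2iβ A·∇u + β²‖A‖²u - β(K_R ∗ (2βA|u|² + J[u]))u`,
where `A = A^R[|u|²]`. -/
def cssRHS (β R : ℝ) (u : E2 → ℂ) (x : E2) : ℂ :=
  -(lap u x) - 2 * β * Complex.I * fderiv ℝ u x (Apot R u x)
    + (↑(β ^ 2 * ‖Apot R u x‖ ^ 2) : ℂ) * u x
    - (β : ℂ) * (↑(convKv R (fun y => (2 * β * ‖u y‖ ^ 2) • Apot R u y + Jf u y) x) : ℂ) * u x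

/-- The (average-field / magnetic) energy `∫ ‖(-i∇ + β A^R[|u|²]) u‖²`. -/
def energy (β R : ℝ) (u : E2 → ℂ) : ℝ :=
  ∫ x, ∑ j : Fin 2,
    ‖-Complex.I * fderiv ℝ u x (e2 j) + (↑(β * Apot R u x j) : ℂ) * u x‖ ^ 2


/-! ### L² toolbox -/

/-- `L²` functions on the plane. -/
abbrev L2f (f : E2 → ℂ) : Prop := MemLp f 2 (volume : Measure E2)

/-- The `L²` norm. -/
def nn (f : E2 → ℂ) : ℝ := √(∫ x, ‖f x‖ ^ 2)

/-- The real `L²` pairing. -/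
def ip (f g : E2 → ℂ) : ℝ := ∫ x, ((starRingEnd ℂ) (f x) * g x).re

lemma nn_nonneg (f : E2 → ℂ) : 0 ≤ nn f := Real.sqrt_nonneg _

lemma nn_sq (f : E2 → ℂ) : nn f ^ 2 = ∫ x, ‖f x‖ ^ 2 :=
  Real.sq_sqrt (integral_nonneg fun x => by positivity)

lemma L2f.int_sq {f : E2 → ℂ} (hf : L2f f) : Integrable (fun x => ‖f x‖ ^ 2) :=
  (memLp_two_iff_integrable_sq_norm hf.1).1 hf

lemma L2f.int_norm_mul {f g : E2 → ℂ} (hf : L2f f) (hg : L2f g) :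
    Integrable (fun x => ‖f x‖ * ‖g x‖) :=
  MemLp.integrable_mul (p := 2) (q := 2) hf.norm hg.norm

lemma L2f.int_mul {f g : E2 → ℂ} (hf : L2f f) (hg : L2f g) :
    Integrable (fun x => f x * g x) :=
  MemLp.integrable_mul (p := 2) (q := 2) hf hg

lemma L2f.conj {f : E2 → ℂ} (hf : L2f f) : L2f (fun x => (starRingEnd ℂ) (f x)) :=
  hf.of_le (Complex.continuous_conj.comp_aestronglyMeasurable hf.1)
    (Filter.Eventually.of_forall fun x => by simp)

lemma L2f.int_ip {f g : E2 → ℂ} (hf : L2f f) (hg : L2f g) :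
    Integrable (fun x => ((starRingEnd ℂ) (f x) * g x).re) :=
  (hf.conj.int_mul hg).re

lemma cs {f g : E2 → ℂ} (hf : L2f f) (hg : L2f g) :
    ∫ x, ‖f x‖ * ‖g x‖ ≤ nn f * nn g := by
  have h := integral_mul_norm_le_Lp_mul_Lq (p := 2) (q := 2) (μ := (volume : Measure E2))
    (f := f) (g := g) Real.HolderConjugate.two_two (by simpa using hf) (by simpa using hg)
  simpa [nn, Real.sqrt_eq_rpow] using h

lemma abs_ip_le {f g : E2 → ℂ} (hf : L2f f) (hg : L2f g) : |ip f g| ≤ nn f * nn g := by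
  refine le_trans ?_ (cs hf hg)
  refine (abs_integral_le_integral_abs).trans ?_
  refine integral_mono (hf.int_ip hg).abs (hf.int_norm_mul hg) fun x => ?_
  refine (Complex.abs_re_le_norm _).trans ?_
  simp

lemma ip_add_right {f g h : E2 → ℂ} (hf : L2f f) (hg : L2f g) (hh : L2f h) :
    ip f (fun x => g x + h x) = ip f g + ip f h := by
  unfold ip
  rw [← integral_add (hf.int_ip hg) (hf.int_ip hh)]
  congr 1; ext x; simp [mul_add]

lemma ip_smul_right (f g : E2 → ℂ) (c : ℝ) :
    ip f (fun x => (c : ℂ) * g x) = c * ip f g := by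
  unfold ip
  rw [← integral_const_mul]
  congr 1; ext x; simp; ring

lemma ip_neg_right (f g : E2 → ℂ) : ip f (fun x => - g x) = - ip f g := by
  unfold ip
  rw [← integral_neg]
  congr 1; ext x; simp

lemma ip_sub_right {f g h : E2 → ℂ} (hf : L2f f) (hg : L2f g) (hh : L2f h) :
    ip f (fun x => g x - h x) = ip f g - ip f h := by
  have := ip_add_right hf hg (h := fun x => - h x) hh.neg
  rw [ip_neg_right] at this
  simpa [sub_eq_add_neg] using this

lemma ip_comm (f g : E2 → ℂ) : ip f g = ip g f := by
  unfold ip; congr 1; ext x; simp; ring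

lemma ip_self (f : E2 → ℂ) : ip f f = nn f ^ 2 := by
  rw [nn_sq]; unfold ip; congr 1; ext x
  rw [← Complex.normSq_eq_conj_mul_self, Complex.normSq_eq_norm_sq, Complex.ofReal_re]

lemma nn_add_sq {f g : E2 → ℂ} (hf : L2f f) (hg : L2f g) :
    nn (fun x => f x + g x) ^ 2 = nn f ^ 2 + 2 * ip f g + nn g ^ 2 := by
  have hfg : L2f (fun x => f x + g x) := hf.add hg
  rw [← ip_self, ip_add_right hfg hf hg, ip_comm _ f, ip_comm _ g, ip_add_right hf hf hg,
    ip_add_right hg hf hg, ip_self, ip_self, ip_comm g f]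
  ring

lemma nn_add_le {f g : E2 → ℂ} (hf : L2f f) (hg : L2f g) :
    nn (fun x => f x + g x) ≤ nn f + nn g := by
  have h1 := nn_add_sq hf hg
  have h2 := (abs_le.1 (abs_ip_le hf hg)).2
  have := nn_nonneg f
  have := nn_nonneg g
  nlinarith [nn_nonneg (fun x => f x + g x)]

lemma nn_neg (f : E2 → ℂ) : nn (fun x => - f x) = nn f := by simp [nn]

lemma nn_sub_le {f g : E2 → ℂ} (hf : L2f f) (hg : L2f g) :
    nn (fun x => f x - g x) ≤ nn f + nn g := by
  have := nn_add_le hf (g := fun x => - g x) hg.neg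
  rw [nn_neg] at this
  simpa [sub_eq_add_neg] using this

/-- Multiplication by a bounded continuous function. -/
lemma L2f.cmul {f a : E2 → ℂ} (hf : L2f f) (ha : Continuous a) {c : ℝ} (hc : ∀ x, ‖a x‖ ≤ c) :
    L2f (fun x => a x * f x) :=
  MemLp.of_le_mul (c := c) hf (ha.aestronglyMeasurable.mul hf.1)
    (Filter.Eventually.of_forall fun x => by
      rw [norm_mul]; exact mul_le_mul_of_nonneg_right (hc x) (norm_nonneg _))

lemma L2f.const_mul' {f : E2 → ℂ} (hf : L2f f) (c : ℂ) : L2f (fun x => c * f x) :=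
  hf.const_mul c

lemma nn_le_of_le {f g : E2 → ℂ} (hg : L2f g) {c : ℝ} (hc : 0 ≤ c)
    (h : ∀ x, ‖f x‖ ≤ c * ‖g x‖) : nn f ≤ c * nn g := by
  have : nn f ^ 2 ≤ (c * nn g) ^ 2 := by
    rw [mul_pow, nn_sq, nn_sq, ← integral_const_mul]
    refine integral_mono_of_nonneg (Filter.Eventually.of_forall fun x => by positivity)
      (hg.int_sq.const_mul _) (Filter.Eventually.of_forall fun x => ?_)
    have := h x
    simp only
    rw [← mul_pow]
    gcongr
  exact le_of_sq_le_sq this (mul_nonneg hc (nn_nonneg g))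
where
  le_of_sq_le_sq {a b : ℝ} (h : a ^ 2 ≤ b ^ 2) (hb : 0 ≤ b) : a ≤ b := by
    exact le_of_abs_le (by simpa [abs_of_nonneg hb] using sq_le_sq.1 h)

lemma nn_const_mul (c : ℂ) (f : E2 → ℂ) : nn (fun x => c * f x) = ‖c‖ * nn f := by
  unfold nn
  have : (fun x => ‖c * f x‖ ^ 2) = fun x => ‖c‖ ^ 2 * ‖f x‖ ^ 2 := by
    ext x; rw [norm_mul, mul_pow]
  rw [this, integral_const_mul, Real.sqrt_mul (by positivity), Real.sqrt_sq (norm_nonneg _)]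

/-! ### Schwartz functions -/

/-- Partial derivative. -/
def dj (j : Fin 2) (f : E2 → ℂ) (x : E2) : ℂ := fderiv ℝ f x (e2 j)

/-- Partial derivative as a Schwartz function. -/
def sdj (j : Fin 2) (f : SchwartzMap E2 ℂ) : SchwartzMap E2 ℂ := LineDeriv.lineDerivOp (e2 j) f

lemma sdj_apply (j : Fin 2) (f : SchwartzMap E2 ℂ) (x : E2) : sdj j f x = dj j f x := by
  rw [sdj, SchwartzMap.lineDerivOp_apply_eq_fderiv]; rfl

lemma sdj_coe (j : Fin 2) (f : SchwartzMap E2 ℂ) : ⇑(sdj j f) = dj j f := funext (sdj_apply j f)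

lemma L2s (f : SchwartzMap E2 ℂ) : L2f f := f.memLp 2 volume

lemma L2d (j : Fin 2) (f : SchwartzMap E2 ℂ) : L2f (dj j f) := by
  rw [← sdj_coe]; exact L2s _

lemma cont_dj (j : Fin 2) (f : SchwartzMap E2 ℂ) : Continuous (dj j f) := by
  rw [← sdj_coe]; exact (sdj j f).continuous

lemma dj_sub (j : Fin 2) (f g : SchwartzMap E2 ℂ) (x : E2) :
    dj j (⇑(f - g)) x = dj j f x - dj j g x := by
  have : ⇑(f - g) = ⇑f - ⇑g := by ext; simp
  unfold dj
  rw [this, fderiv_sub f.differentiableAt g.differentiableAt]; rfl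

/-- Laplacian as Schwartz. -/
def slap (f : SchwartzMap E2 ℂ) : SchwartzMap E2 ℂ := ∑ j : Fin 2, sdj j (sdj j f)

lemma slap_coe (f : SchwartzMap E2 ℂ) : ⇑(slap f) = lap f := by
  ext x
  simp only [slap, lap, Fin.sum_univ_two, add_apply, sdj_apply, sdj_coe]
  rfl

lemma L2lap (f : SchwartzMap E2 ℂ) : L2f (lap f) := by
  rw [← slap_coe]; exact L2s _

lemma lap_sub (f g : SchwartzMap E2 ℂ) (x : E2) : lap (⇑(f - g)) x = lap f x - lap g x := by
  have h : ∀ j (f g : SchwartzMap E2 ℂ), sdj j (f - g) = sdj j f - sdj j g := fun j f g => by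
    ext x; rw [sub_apply, sdj_apply, sdj_apply, sdj_apply, dj_sub]
  rw [← slap_coe, ← slap_coe, ← slap_coe]
  simp only [slap, Fin.sum_univ_two, h, add_apply, sub_apply]
  ring

/-- Integration by parts. -/
lemma ip_dj_dj (j : Fin 2) (f g : SchwartzMap E2 ℂ) :
    ip (dj j f) (dj j g) = - ip (dj j (dj j f)) g := by
  have hdc : ∀ x, fderiv ℝ (fun x => (starRingEnd ℂ) (dj j f x)) x (e2 j)
      = (starRingEnd ℂ) (dj j (dj j f) x) := by
    intro x
    have h1 : HasFDerivAt (dj j f) (fderiv ℝ (dj j f) x) x := by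
      rw [← sdj_coe]; exact (sdj j f).differentiableAt.hasFDerivAt
    have h2 := (Complex.conjCLE.toContinuousLinearMap.hasFDerivAt (x := dj j f x)).comp x h1
    have h3 := h2.fderiv
    have h4 : (fun x => (starRingEnd ℂ) (dj j f x)) = (⇑(Complex.conjCLE.toContinuousLinearMap) ∘ dj j f) := by
      ext x; simp
    rw [h4, h3]
    simp [dj]
  have hdd : L2f (dj j (dj j f)) := by
    rw [← sdj_coe, ← sdj_coe]; exact L2s _
  have key := integral_mul_fderiv_eq_neg_fderiv_mul_of_integrable (μ := (volume : Measure E2))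
    (f := fun x => (starRingEnd ℂ) (dj j f x)) (g := g) (v := e2 j)
    (by simp only [hdc]; exact hdd.conj.int_mul (L2s g))
    ((L2d j f).conj.int_mul (L2d j g)) ((L2d j f).conj.int_mul (L2s g))
    (fun x _ => by
      have : DifferentiableAt ℝ (dj j f) x := by
        rw [← sdj_coe]; exact (sdj j f).differentiableAt
      exact (Complex.conjCLE.toContinuousLinearMap.differentiableAt).comp x this)
    (fun x _ => g.differentiableAt)
  have e1 : ip (dj j f) (dj j g)
      = (∫ x, (starRingEnd ℂ) (dj j f x) * fderiv ℝ g x (e2 j)).re := by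
    unfold ip; exact integral_re ((L2d j f).conj.int_mul (L2d j g))
  have e2' : ip (dj j (dj j f)) g = (∫ x, (starRingEnd ℂ) (dj j (dj j f) x) * g x).re := by
    unfold ip; exact integral_re (hdd.conj.int_mul (L2s g))
  rw [e1, e2', key]
  simp only [hdc, Complex.neg_re]

/-! ### The kernel -/

lemma perp_apply0 (x : E2) : perp x 0 = -(x 1) := by simp [perp]
lemma perp_apply1 (x : E2) : perp x 1 = x 0 := by simp [perp]

lemma norm_perp (x : E2) : ‖perp x‖ = ‖x‖ := by
  rw [EuclideanSpace.norm_eq, EuclideanSpace.norm_eq]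
  simp [Fin.sum_univ_two, perp_apply0, perp_apply1, add_comm]

lemma perp_neg (x : E2) : perp (-x) = - perp x := by
  ext i; fin_cases i <;> simp [perp]

lemma continuous_perp : Continuous perp := by
  unfold perp
  have : Continuous (fun x : E2 => (![-(x 1), x 0] : Fin 2 → ℝ)) := by
    refine continuous_pi fun i => ?_
    fin_cases i <;> simp <;> fun_prop
  exact (PiLp.continuous_toLp 2 _).comp this

lemma K_neg (R : ℝ) (x : E2) : K R (-x) = - K R x := by
  simp [K, perp_neg]

lemma continuous_K {R : ℝ} (hR : 0 < R) : Continuous (K R) := by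
  unfold K
  refine Continuous.smul (Continuous.inv₀ ((continuous_const.max continuous_norm).pow 2) fun x => ?_) continuous_perp
  have : 0 < max R ‖x‖ := lt_max_of_lt_left hR
  exact (pow_pos this 2).ne'

lemma norm_K_le {R : ℝ} (hR : 0 < R) (x : E2) : ‖K R x‖ ≤ R⁻¹ := by
  have h0 : 0 < max R ‖x‖ := lt_max_of_lt_left hR
  rw [K, norm_smul, norm_perp, norm_inv, norm_pow, Real.norm_of_nonneg h0.le]
  calc ((max R ‖x‖) ^ 2)⁻¹ * ‖x‖ ≤ ((max R ‖x‖) ^ 2)⁻¹ * max R ‖x‖ := by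
        gcongr; exact le_max_right _ _
    _ = (max R ‖x‖)⁻¹ := by field_simp
    _ ≤ R⁻¹ := by gcongr; exact le_max_left _ _

lemma int_convKs {R : ℝ} (hR : 0 < R) {ρ : E2 → ℝ} (hρ : Integrable ρ) (x : E2) :
    Integrable (fun y => ρ y • K R (x - y)) :=
  hρ.smul_bdd R⁻¹ ((continuous_K hR).comp (continuous_const.sub continuous_id)).aestronglyMeasurable
    (Filter.Eventually.of_forall fun y => norm_K_le hR _)

lemma norm_convKs_le {R : ℝ} (hR : 0 < R) {ρ : E2 → ℝ} (hρ : Integrable ρ) (x : E2) :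
    ‖convKs R ρ x‖ ≤ R⁻¹ * ∫ y, |ρ y| := by
  rw [← integral_const_mul]
  refine norm_integral_le_of_norm_le (hρ.abs.const_mul _) (Filter.Eventually.of_forall fun y => ?_)
  rw [norm_smul, mul_comm]
  exact mul_le_mul_of_nonneg_right (norm_K_le hR _) (abs_nonneg _)

lemma continuous_convKs {R : ℝ} (hR : 0 < R) {ρ : E2 → ℝ} (hρ : Integrable ρ) : Continuous (convKs R ρ) := by
  refine continuous_of_dominated (bound := fun y => |ρ y| * R⁻¹)
    (fun x => (int_convKs hR hρ x).1) (fun x => Filter.Eventually.of_forall fun y => ?_)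
    (hρ.abs.mul_const _) (Filter.Eventually.of_forall fun y => ?_)
  · rw [norm_smul]
    exact mul_le_mul_of_nonneg_left (norm_K_le hR _) (abs_nonneg _)
  · exact Continuous.const_smul ((continuous_K hR).comp (continuous_id.sub continuous_const)) (ρ y)

lemma convKs_add {R : ℝ} (hR : 0 < R) {ρ σ : E2 → ℝ} (hρ : Integrable ρ) (hσ : Integrable σ) (x : E2) :
    convKs R (fun y => ρ y + σ y) x = convKs R ρ x + convKs R σ x := by
  unfold convKs
  rw [← integral_add (int_convKs hR hρ x) (int_convKs hR hσ x)]
  congr 1; ext1 y; rw [add_smul]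

lemma int_convKv {R : ℝ} (hR : 0 < R) {G : E2 → E2} (hG : Integrable G) (x : E2) :
    Integrable (fun y => ⟪K R (x - y), G y⟫) := by
  refine Integrable.mono' (hG.norm.const_mul R⁻¹)
    (AEStronglyMeasurable.inner (𝕜 := ℝ) (f := fun y => K R (x - y))
      ((continuous_K hR).comp (continuous_const.sub continuous_id)).aestronglyMeasurable hG.1)
    (Filter.Eventually.of_forall fun y => ?_)
  refine (norm_inner_le_norm _ _).trans ?_
  exact mul_le_mul_of_nonneg_right (norm_K_le hR _) (norm_nonneg _)

lemma abs_convKv_le {R : ℝ} (hR : 0 < R) {G : E2 → E2} (hG : Integrable G) (x : E2) :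
    |convKv R G x| ≤ R⁻¹ * ∫ y, ‖G y‖ := by
  rw [← Real.norm_eq_abs, convKv]
  rw [← integral_const_mul]
  refine norm_integral_le_of_norm_le (hG.norm.const_mul _) (Filter.Eventually.of_forall fun y => ?_)
  refine (norm_inner_le_norm _ _).trans ?_
  exact mul_le_mul_of_nonneg_right (norm_K_le hR _) (norm_nonneg _)

lemma continuous_convKv {R : ℝ} (hR : 0 < R) {G : E2 → E2} (hG : Integrable G) : Continuous (convKv R G) := by
  refine continuous_of_dominated (bound := fun y => R⁻¹ * ‖G y‖)
    (fun x => (int_convKv hR hG x).1) (fun x => Filter.Eventually.of_forall fun y => ?_)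
    (hG.norm.const_mul _) (Filter.Eventually.of_forall fun y => ?_)
  · refine (norm_inner_le_norm _ _).trans ?_
    exact mul_le_mul_of_nonneg_right (norm_K_le hR _) (norm_nonneg _)
  · exact Continuous.inner (𝕜 := ℝ) ((continuous_K hR).comp (continuous_id.sub continuous_const)) continuous_const

lemma convKv_add {R : ℝ} (hR : 0 < R) {G H : E2 → E2} (hG : Integrable G) (hH : Integrable H) (x : E2) :
    convKv R (fun y => G y + H y) x = convKv R G x + convKv R H x := by
  unfold convKv
  rw [← integral_add (int_convKv hR hG x) (int_convKv hR hH x)]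
  congr 1; ext1 y; rw [inner_add_right]

lemma convKv_smul {R : ℝ} (c : ℝ) (G : E2 → E2) (x : E2) :
    convKv R (fun y => c • G y) x = c * convKv R G x := by
  unfold convKv
  rw [← integral_const_mul]
  congr 1; ext1 y; rw [inner_smul_right]

lemma fubini_conv {R : ℝ} (hR : 0 < R) {ρ : E2 → ℝ} (hρ : Integrable ρ) {G : E2 → E2} (hG : Integrable G) :
    ∫ x, ⟪convKs R ρ x, G x⟫ = - ∫ y, ρ y * convKv R G y := by
  have h1 : ∀ x, ⟪convKs R ρ x, G x⟫ = ∫ y, ρ y * ⟪K R (x - y), G x⟫ := by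
    intro x
    rw [real_inner_comm, convKs, ← integral_inner (int_convKs hR hρ x)]
    congr 1; ext1 y
    rw [inner_smul_right, real_inner_comm]
  have h2 : ∀ y, ρ y * convKv R G y = - ∫ x, ρ y * ⟪K R (x - y), G x⟫ := by
    intro y
    rw [convKv, ← integral_const_mul, ← integral_neg]
    congr 1; ext1 x
    rw [← neg_sub x y, K_neg, inner_neg_left]; ring
  simp only [h1, h2, integral_neg, neg_neg]
  refine integral_integral_swap ?_
  have hm : Integrable (fun p : E2 × E2 => ‖G p.1‖ * |ρ p.2|) (volume.prod volume) :=
    hG.norm.mul_prod hρ.abs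
  refine Integrable.mono' (hm.const_mul R⁻¹) ?_ (Filter.Eventually.of_forall fun p => ?_)
  · refine AEStronglyMeasurable.mul hρ.1.comp_snd ?_
    exact ((continuous_K hR).comp (continuous_fst.sub continuous_snd)).aestronglyMeasurable.inner hG.1.comp_fst
  · simp only [Function.uncurry, norm_mul, Real.norm_eq_abs]
    have h3 := abs_real_inner_le_norm (K R (p.1 - p.2)) (G p.1)
    have h4 := norm_K_le hR (p.1 - p.2)
    calc |ρ p.2| * |⟪K R (p.1 - p.2), G p.1⟫| ≤ |ρ p.2| * (R⁻¹ * ‖G p.1‖) := by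
          gcongr; exact h3.trans (by gcongr)
      _ = R⁻¹ * (‖G p.1‖ * |ρ p.2|) := by ring

/-- The kernel is divergence free. -/
lemma divfree {R : ℝ} (hR : 0 < R) {φ : E2 → ℝ} (hφ : ContDiff ℝ 1 φ) (hi : Integrable (gradient φ)) (x : E2) :
    convKv R (gradient φ) x = 0 := by
  have hintg := int_convKv hR hi x
  have hgr : ∀ y w, ⟪w, gradient φ y⟫ = fderiv ℝ φ y w := by
    intro y w
    rw [real_inner_comm, gradient, InnerProductSpace.toDual_symm_apply]
  unfold convKv
  rw [← integral_sub_left_eq_self _ volume x]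
  have hintg' : Integrable (fun y => ⟪K R (x - (x - y)), gradient φ (x - y)⟫) :=
    hintg.comp_sub_left x
  have hss : ∀ y : E2, x - (x - y) = y := fun y => by abel
  simp only [hss, hgr] at hintg' ⊢
  let Φ : ℂ ≃ₗᵢ[ℝ] E2 := Complex.orthonormalBasisOneI.repr
  have hmp := Φ.measurePreserving
  have hme : MeasurableEmbedding Φ := Φ.toHomeomorph.measurableEmbedding
  rw [← hmp.integral_comp hme]
  rw [← hmp.integrable_comp_emb hme] at hintg'
  rw [← Complex.integral_comp_polarCoord_symm]
  have hΦ : ∀ z : ℂ, perp (Φ z) = Φ (Complex.I * z) := by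
    intro z; ext i; fin_cases i <;> simp [Φ, perp]
  let ψ : ℝ × ℝ → ℝ := fun p => φ (x - Φ (p.1 * Complex.exp (p.2 * Complex.I)))
  have hder : ∀ r θ : ℝ, HasDerivAt (fun θ : ℝ => ψ (r, θ))
      (- fderiv ℝ φ (x - Φ (r * Complex.exp (θ * Complex.I)))
        (perp (Φ (r * Complex.exp (θ * Complex.I))))) θ := by
    intro r θ
    have h1 : HasDerivAt (fun θ : ℝ => (r : ℂ) * Complex.exp (θ * Complex.I))
        (Complex.I * (r * Complex.exp (θ * Complex.I))) θ := by
      have h0 : HasDerivAt (fun θ : ℝ => (θ : ℂ) * Complex.I) (1 * Complex.I) θ :=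
        (Complex.ofRealCLM.hasDerivAt (x := θ)).mul_const Complex.I
      have := (h0.cexp).const_mul (r : ℂ)
      rw [show Complex.I * (r * Complex.exp (θ * Complex.I))
        = r * (Complex.exp (θ * Complex.I) * (1 * Complex.I)) by ring]
      exact this
    have h2 : HasDerivAt (fun θ : ℝ => Φ ((r : ℂ) * Complex.exp (θ * Complex.I)))
        (Φ (Complex.I * (r * Complex.exp (θ * Complex.I)))) θ :=
      (Φ.toContinuousLinearEquiv.toContinuousLinearMap.hasFDerivAt).comp_hasDerivAt θ h1
    have h3 := h2.const_sub x
    have h4 := ((hφ.differentiable one_ne_zero) (x - Φ (r * Complex.exp (θ * Complex.I)))).hasFDerivAt.comp_hasDerivAt θ h3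
    rw [hΦ, ← map_neg]; exact h4
  have hpt : ∀ p ∈ Complex.polarCoord.target, p.1 • (fderiv ℝ φ (x - Φ (Complex.polarCoord.symm p)))
      (K R (Φ (Complex.polarCoord.symm p))) = - (p.1 * ((max R p.1) ^ 2)⁻¹) *
        deriv (fun θ : ℝ => ψ (p.1, θ)) p.2 := by
    rintro ⟨r, θ⟩ hp
    have hr : 0 < r := by
      rw [Complex.polarCoord_target] at hp; exact hp.1
    have he : Complex.polarCoord.symm (r, θ) = r * Complex.exp (θ * Complex.I) := by
      rw [Complex.polarCoord_symm_apply, Complex.exp_mul_I, Complex.ofReal_cos, Complex.ofReal_sin]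
    rw [(hder r θ).deriv, he, K, Φ.norm_map]
    simp [Complex.norm_exp_ofReal_mul_I, abs_of_pos hr]
    ring
  have htm : MeasurableSet (polarCoord.target) := polarCoord.open_target.measurableSet
  have hint3 : IntegrableOn (fun p : ℝ × ℝ => p.1 • (fderiv ℝ φ (x - Φ (Complex.polarCoord.symm p)))
      (K R (Φ (Complex.polarCoord.symm p)))) polarCoord.target := by
    refine ⟨?_, ?_⟩
    · refine Continuous.aestronglyMeasurable ?_
      have hc : Continuous (fun p : ℝ × ℝ => Φ (Complex.polarCoord.symm p)) := by
        simp only [Complex.polarCoord_symm_apply]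
        exact Φ.continuous.comp (by fun_prop)
      exact continuous_fst.smul (((hφ.continuous_fderiv one_ne_zero).comp
        (continuous_const.sub hc)).clm_apply ((continuous_K hR).comp hc))
    · have h5 := hintg'.2
      rw [hasFiniteIntegral_iff_enorm, ← Complex.lintegral_comp_polarCoord_symm] at h5
      rw [hasFiniteIntegral_iff_enorm]
      refine lt_of_le_of_lt (le_of_eq (setLIntegral_congr_fun htm fun p hp => ?_)) h5
      have hr : 0 < p.1 := by rw [polarCoord_target] at hp; exact hp.1
      simp only [Function.comp, smul_eq_mul, enorm_mul, Real.enorm_of_nonneg hr.le]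
  rw [setIntegral_congr_fun htm hpt]
  replace hint3 := hint3.congr_fun hpt htm
  rw [polarCoord_target] at hint3 ⊢
  rw [Measure.volume_eq_prod] at hint3 ⊢
  rw [setIntegral_prod _ hint3]
  have : ∀ r : ℝ, ∫ θ in Set.Ioo (-Real.pi) Real.pi, -(r * ((max R r) ^ 2)⁻¹) *
        deriv (fun θ : ℝ => ψ (r, θ)) θ = 0 := by
    intro r
    rw [integral_const_mul, ← integral_Ioc_eq_integral_Ioo,
      ← intervalIntegral.integral_of_le (by linarith [Real.pi_pos])]
    rw [intervalIntegral.integral_deriv_eq_sub' _ rfl (fun θ _ => (hder r θ).differentiableAt)]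
    · simp [ψ, Complex.exp_pi_mul_I, Complex.exp_neg]
    · have : deriv (fun θ : ℝ => ψ (r, θ)) = fun θ : ℝ => - fderiv ℝ φ (x - Φ (r * Complex.exp (θ * Complex.I)))
        (perp (Φ (r * Complex.exp (θ * Complex.I)))) := funext fun θ => (hder r θ).deriv
      rw [this]
      have hc : Continuous (fun θ : ℝ => Φ (r * Complex.exp (θ * Complex.I))) :=
        Φ.continuous.comp (by fun_prop)
      exact (((hφ.continuous_fderiv one_ne_zero).comp (continuous_const.sub hc)).clm_apply
        (continuous_perp.comp hc)).neg.continuousOn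
  simp only [this, integral_zero]

/-! ### Fixed-time facts -/

lemma norm_le_coord (v : E2) : ‖v‖ ≤ |v 0| + |v 1| := by
  rw [EuclideanSpace.norm_eq, Fin.sum_univ_two]
  refine Real.sqrt_le_iff.2 ⟨by positivity, ?_⟩
  simp only [Real.norm_eq_abs]
  nlinarith [abs_nonneg (v 0), abs_nonneg (v 1)]

lemma coord_le_norm (v : E2) (j : Fin 2) : |v j| ≤ ‖v‖ := PiLp.norm_apply_le v j

lemma inner_coord (v w : E2) : ⟪v, w⟫ = v 0 * w 0 + v 1 * w 1 := by
  rw [PiLp.inner_apply, Fin.sum_univ_two]; simp; ring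

lemma e2_decomp (a : E2) : a = a 0 • e2 0 + a 1 • e2 1 := by
  ext i; fin_cases i <;> simp [e2]

lemma fderiv_coord {F : Type*} [NormedAddCommGroup F] [NormedSpace ℝ F] (L : E2 →L[ℝ] F) (a : E2) :
    L a = a 0 • L (e2 0) + a 1 • L (e2 1) := by
  conv_lhs => rw [e2_decomp a]
  rw [map_add, map_smul, map_smul]

lemma gradient_coord (φ : E2 → ℝ) (x : E2) (j : Fin 2) :
    gradient φ x j = fderiv ℝ φ x (e2 j) := by
  have h : ⟪gradient φ x, e2 j⟫ = fderiv ℝ φ x (e2 j) := by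
    rw [gradient, InnerProductSpace.toDual_symm_apply]
  rw [← h, e2, EuclideanSpace.inner_single_right]; simp

/-- `L (conj f * g)`. -/
def pf (L : ℂ →L[ℝ] ℝ) (f g : E2 → ℂ) (x : E2) : ℝ := L ((starRingEnd ℂ) (f x) * g x)

/-- its partial derivatives -/
def dpf (L : ℂ →L[ℝ] ℝ) (f g : E2 → ℂ) (j : Fin 2) (x : E2) : ℝ :=
  L ((starRingEnd ℂ) (dj j f x) * g x + (starRingEnd ℂ) (f x) * dj j g x)

lemma pf_contDiff (L : ℂ →L[ℝ] ℝ) (f g : SchwartzMap E2 ℂ) : ContDiff ℝ 1 (pf L f g) := by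
  unfold pf
  have hf : ContDiff ℝ 1 f := f.smooth 1
  have hg : ContDiff ℝ 1 g := g.smooth 1
  exact L.contDiff.comp ((Complex.conjCLE.toContinuousLinearMap.contDiff.comp hf).mul hg)

lemma pf_fderiv (L : ℂ →L[ℝ] ℝ) (f g : SchwartzMap E2 ℂ) (j : Fin 2) (x : E2) :
    fderiv ℝ (pf L f g) x (e2 j) = dpf L f g j x := by
  have hf : HasFDerivAt f (fderiv ℝ f x) x := f.differentiableAt.hasFDerivAt
  have hg : HasFDerivAt g (fderiv ℝ g x) x := g.differentiableAt.hasFDerivAt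
  have hc := (Complex.conjCLE.toContinuousLinearMap.hasFDerivAt (x := f x)).comp x hf
  have h := (L.hasFDerivAt).comp x (hc.mul hg)
  have h' : HasFDerivAt (pf L f g) _ x := h
  rw [h'.fderiv]
  simp [dpf, dj]
  ring_nf

lemma dpf_cont (L : ℂ →L[ℝ] ℝ) (f g : SchwartzMap E2 ℂ) (j : Fin 2) : Continuous (dpf L f g j) := by
  unfold dpf
  have := cont_dj j f
  have := cont_dj j g
  have := f.continuous
  have := g.continuous
  fun_prop

lemma grad_pf_coord (L : ℂ →L[ℝ] ℝ) (f g : SchwartzMap E2 ℂ) (x : E2) (j : Fin 2) :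
    gradient (pf L f g) x j = dpf L f g j x := by
  rw [gradient_coord, pf_fderiv]

lemma dpf_int (L : ℂ →L[ℝ] ℝ) (f g : SchwartzMap E2 ℂ) (j : Fin 2) : Integrable (dpf L f g j) :=
  L.integrable_comp (((L2d j f).conj.int_mul (L2s g)).add ((L2s f).conj.int_mul (L2d j g)))

lemma grad_pf_int (L : ℂ →L[ℝ] ℝ) (f g : SchwartzMap E2 ℂ) : Integrable (gradient (pf L f g)) := by
  refine Integrable.mono' ((dpf_int L f g 0).abs.add (dpf_int L f g 1).abs) ?_
    (Filter.Eventually.of_forall fun x => ?_)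
  · refine Continuous.aestronglyMeasurable ?_
    unfold gradient
    exact (InnerProductSpace.toDual ℝ E2).symm.continuous.comp
      ((pf_contDiff L f g).continuous_fderiv one_ne_zero)
  · refine (norm_le_coord _).trans ?_
    rw [grad_pf_coord, grad_pf_coord]; rfl

lemma divK {R : ℝ} (hR : 0 < R) (L : ℂ →L[ℝ] ℝ) (f g : SchwartzMap E2 ℂ) (x : E2) :
    convKv R (gradient (pf L f g)) x = 0 :=
  divfree hR (pf_contDiff L f g) (grad_pf_int L f g) x

lemma divA {R : ℝ} (hR : 0 < R) {ρ : E2 → ℝ} (hρ : Integrable ρ) (L : ℂ →L[ℝ] ℝ)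
    (f g : SchwartzMap E2 ℂ) :
    ∫ x, (convKs R ρ x 0 * dpf L f g 0 x + convKs R ρ x 1 * dpf L f g 1 x) = 0 := by
  have h := fubini_conv hR hρ (grad_pf_int L f g)
  simp only [divK hR, mul_zero, integral_zero, neg_zero, inner_coord, grad_pf_coord] at h
  exact h

/-- `H¹` bound. -/
def Bd (M : ℝ) (u : E2 → ℂ) : Prop := nn u ≤ M ∧ ∀ j, nn (dj j u) ≤ M

lemma Bd.nonneg {M : ℝ} {u : E2 → ℂ} (h : Bd M u) : 0 ≤ M := (nn_nonneg _).trans h.1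

section A
variable {R : ℝ}

lemma continuous_A (hR : 0 < R) (u : SchwartzMap E2 ℂ) : Continuous (Apot R u) :=
  continuous_convKs hR (L2s u).int_sq

lemma norm_A_le (hR : 0 < R) (u : SchwartzMap E2 ℂ) (x : E2) : ‖Apot R u x‖ ≤ R⁻¹ * nn u ^ 2 := by
  refine (norm_convKs_le hR (L2s u).int_sq x).trans ?_
  rw [nn_sq]
  simp

/-- first-order variation density -/
def rho1 (v δ : E2 → ℂ) (y : E2) : ℝ := 2 * ((starRingEnd ℂ) (v y) * δ y).re

lemma rho1_int {v δ : E2 → ℂ} (hv : L2f v) (hd : L2f δ) : Integrable (rho1 v δ) :=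
  (hv.int_ip hd).const_mul 2

lemma A_sub (hR : 0 < R) (u v : SchwartzMap E2 ℂ) (x : E2) :
    Apot R u x = Apot R v x + (convKs R (rho1 v (⇑(u - v))) x
      + convKs R (fun y => ‖(u - v) y‖ ^ 2) x) := by
  have hi : Integrable (fun y => rho1 v (⇑(u - v)) y + ‖(u - v) y‖ ^ 2) :=
    (rho1_int (L2s v) (L2s (u - v))).add (L2s (u - v)).int_sq
  rw [← convKs_add hR (rho1_int (L2s v) (L2s (u - v))) (L2s (u - v)).int_sq, Apot, Apot,
    ← convKs_add hR (L2s v).int_sq hi]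
  congr 1; ext y
  rw [rho1, sub_apply]
  simp only [← Complex.normSq_eq_norm_sq, Complex.normSq_apply]
  simp
  ring

lemma int_abs_rho1_le {v δ : E2 → ℂ} (hv : L2f v) (hd : L2f δ) :
    ∫ y, |rho1 v δ y| ≤ 2 * (nn v * nn δ) := by
  calc ∫ y, |rho1 v δ y| ≤ ∫ y, 2 * (‖v y‖ * ‖δ y‖) := by
        refine integral_mono (rho1_int hv hd).abs ((hv.int_norm_mul hd).const_mul 2) fun y => ?_
        simp only [rho1, abs_mul, abs_two]
        gcongr
        refine (Complex.abs_re_le_norm _).trans (by simp)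
    _ ≤ _ := by rw [integral_const_mul]; gcongr; exact cs hv hd

lemma A1_le (hR : 0 < R) {v δ : E2 → ℂ} (hv : L2f v) (hd : L2f δ) (x : E2) :
    ‖convKs R (rho1 v δ) x‖ ≤ R⁻¹ * (2 * (nn v * nn δ)) :=
  (norm_convKs_le hR (rho1_int hv hd) x).trans (by gcongr; exact int_abs_rho1_le hv hd)

lemma A2_le (hR : 0 < R) {δ : E2 → ℂ} (hd : L2f δ) (x : E2) :
    ‖convKs R (fun y => ‖δ y‖ ^ 2) x‖ ≤ R⁻¹ * nn δ ^ 2 := by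
  refine (norm_convKs_le hR hd.int_sq x).trans ?_
  rw [nn_sq]
  simp

lemma nn_diff_le {M : ℝ} {u v : SchwartzMap E2 ℂ} (hu : nn u ≤ M) (hv : nn v ≤ M) :
    nn (⇑(u - v)) ≤ 2 * M := by
  have h := nn_sub_le (L2s u) (L2s v)
  have e : (fun x => u x - v x) = ⇑(u - v) := by ext x; rw [sub_apply]
  rw [e] at h; linarith

lemma A_sub_le (hR : 0 < R) {M : ℝ} {u v : SchwartzMap E2 ℂ} (hu : nn u ≤ M) (hv : nn v ≤ M)
    (x : E2) : ‖Apot R u x - Apot R v x‖ ≤ 4 * R⁻¹ * M * nn (⇑(u - v)) := by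
  have h0 := nn_nonneg (⇑(u - v))
  have hM : 0 ≤ M := (nn_nonneg _).trans hu
  have h1 := nn_diff_le hu hv
  have hRi : 0 ≤ R⁻¹ := by positivity
  rw [A_sub hR u v x, add_sub_cancel_left]
  refine (norm_add_le _ _).trans ?_
  have h2 := A1_le hR (L2s v) (L2s (u - v)) x
  have h3 := A2_le hR (L2s (u - v)) x
  have h4 : nn v * nn (⇑(u - v)) ≤ M * nn (⇑(u - v)) := by gcongr
  have h5 : nn (⇑(u - v)) ^ 2 ≤ 2 * M * nn (⇑(u - v)) := by nlinarith
  have h6 : R⁻¹ * (2 * (nn v * nn (⇑(u - v)))) ≤ R⁻¹ * (2 * (M * nn (⇑(u - v)))) := by gcongr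
  have h7 : R⁻¹ * nn (⇑(u - v)) ^ 2 ≤ R⁻¹ * (2 * M * nn (⇑(u - v))) := by gcongr
  calc _ ≤ R⁻¹ * (2 * (M * nn (⇑(u - v)))) + R⁻¹ * (2 * M * nn (⇑(u - v))) := by linarith
    _ = _ := by ring

/-- The total current. -/
def jcur (β R : ℝ) (u : E2 → ℂ) (y : E2) : E2 := (2 * β * ‖u y‖ ^ 2) • Apot R u y + Jf u y

lemma Jf_coord (u : E2 → ℂ) (x : E2) (j : Fin 2) :
    Jf u x j = 2 * ((starRingEnd ℂ) (u x) * dj j u x).im := by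
  simp [Jf, dj]

lemma continuous_Jf (u : SchwartzMap E2 ℂ) : Continuous (Jf u) := by
  unfold Jf
  have h : Continuous (fun x => fun j : Fin 2 => 2 * ((starRingEnd ℂ) (u x) * fderiv ℝ u x (e2 j)).im) := by
    refine continuous_pi fun j => ?_
    have := cont_dj j u
    unfold dj at this
    have := u.continuous
    fun_prop
  exact (PiLp.continuous_toLp 2 _).comp h

lemma continuous_jcur (β : ℝ) (hR : 0 < R) (u : SchwartzMap E2 ℂ) : Continuous (jcur β R u) := by
  unfold jcur
  have := continuous_A hR u
  have := continuous_Jf u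
  have := u.continuous
  fun_prop

lemma int_jcur (β : ℝ) (hR : 0 < R) (u : SchwartzMap E2 ℂ) : Integrable (jcur β R u) := by
  refine Integrable.mono' (((L2s u).int_sq.const_mul (2 * |β| * (R⁻¹ * nn u ^ 2))).add
    ((((L2s u).int_norm_mul (L2d 0 u)).const_mul 2).add
      (((L2s u).int_norm_mul (L2d 1 u)).const_mul 2)))
    (continuous_jcur β hR u).aestronglyMeasurable (Filter.Eventually.of_forall fun x => ?_)
  refine (norm_add_le _ _).trans (add_le_add ?_ ?_)
  · rw [norm_smul]
    have := norm_A_le hR u x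
    calc _ ≤ ‖2 * β * ‖u x‖ ^ 2‖ * (R⁻¹ * nn u ^ 2) := by gcongr
      _ = _ := by simp [abs_mul]; ring
  · refine (norm_le_coord _).trans ?_
    rw [Jf_coord, Jf_coord, abs_mul, abs_mul, abs_two]
    refine add_le_add ?_ ?_
    all_goals
      exact mul_le_mul_of_nonneg_left ((Complex.abs_im_le_norm _).trans (by simp)) zero_le_two

/-- The scalar potential. -/
def Wf (β R : ℝ) (u : E2 → ℂ) (x : E2) : ℝ := -β * convKv R (jcur β R u) x

lemma continuous_W (β : ℝ) (hR : 0 < R) (u : SchwartzMap E2 ℂ) : Continuous (Wf β R u) :=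
  continuous_const.mul (continuous_convKv hR (int_jcur β hR u))

lemma W_bdd (β : ℝ) (hR : 0 < R) (u : SchwartzMap E2 ℂ) : ∃ c, ∀ x, |Wf β R u x| ≤ c :=
  ⟨|β| * (R⁻¹ * ∫ y, ‖jcur β R u y‖), fun x => by
    rw [Wf, abs_mul, abs_neg]
    gcongr
    exact abs_convKv_le hR (int_jcur β hR u) x⟩

lemma jcur_sub (β : ℝ) (u v : SchwartzMap E2 ℂ) (y : E2) :
    jcur β R u y = jcur β R v y + ((2 * β) • ((‖u y‖ ^ 2) • (Apot R u y - Apot R v y)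
      + (‖u y‖ ^ 2 - ‖v y‖ ^ 2) • Apot R v y)
      + WithLp.toLp 2 (fun j => 2 * ((starRingEnd ℂ) ((u - v) y) * (dj j u y + dj j v y)).im)
      + (2 : ℝ) • gradient (pf Complex.imCLM v (⇑(u - v))) y) := by
  ext j
  simp only [jcur, PiLp.add_apply, PiLp.smul_apply, PiLp.sub_apply, Jf_coord, grad_pf_coord, dpf,
    dj_sub, sub_apply, smul_eq_mul, Complex.imCLM_apply, Complex.mul_im, Complex.add_im, Complex.add_re,
    Complex.sub_im, Complex.sub_re, Complex.conj_re, Complex.conj_im]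
  ring

lemma W_diff (β : ℝ) (hR : 0 < R) (M : ℝ) : ∃ C, 0 ≤ C ∧ ∀ u v : SchwartzMap E2 ℂ, Bd M u → Bd M v →
    ∀ x, |Wf β R u x - Wf β R v x| ≤ C * nn (⇑(u - v)) := by
  let c1 : ℝ := 2 * |β| * (4 * R⁻¹ * M)
  let c2 : ℝ := 2 * |β| * (R⁻¹ * M ^ 2)
  refine ⟨|β| * R⁻¹ * (|c1| * M ^ 2 + |c2| * (2 * |M|) + 8 * |M|), by positivity, fun u v hu hv x => ?_⟩
  have hM := hu.nonneg
  have hRi : 0 ≤ R⁻¹ := by positivity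
  set δ := u - v with hδ
  have hc1 : 0 ≤ c1 := by positivity
  have hc2 : 0 ≤ c2 := by positivity
  rw [abs_of_nonneg hc1, abs_of_nonneg hc2, abs_of_nonneg hM]
  let Y : E2 → E2 := fun y => (2 * β) • ((‖u y‖ ^ 2) • (Apot R u y - Apot R v y)
      + (‖u y‖ ^ 2 - ‖v y‖ ^ 2) • Apot R v y)
      + WithLp.toLp 2 (fun j => 2 * ((starRingEnd ℂ) (δ y) * (dj j u y + dj j v y)).im)
  have hYe : ∀ y, Y y = jcur β R u y - jcur β R v y - (2 : ℝ) • gradient (pf Complex.imCLM v δ) y := by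
    intro y
    have := jcur_sub (R := R) β u v y
    rw [this]; simp only [Y, hδ]; abel
  have hg := grad_pf_int Complex.imCLM v δ
  have hg2 : Integrable (fun y => (2 : ℝ) • gradient (pf Complex.imCLM v δ) y) := hg.smul (2 : ℝ)
  have hYi : Integrable Y := by
    have : Y = fun y => jcur β R u y - jcur β R v y - (2 : ℝ) • gradient (pf Complex.imCLM v δ) y :=
      funext hYe
    rw [this]
    exact ((int_jcur β hR u).sub (int_jcur β hR v)).sub hg2
  have hW : Wf β R u x - Wf β R v x = -β * convKv R Y x := by
    have h1 : jcur β R u = fun y => jcur β R v y + (Y y + (2 : ℝ) • gradient (pf Complex.imCLM v δ) y) := by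
      funext y; rw [hYe]; abel
    have hs : Integrable (fun y => Y y + (2 : ℝ) • gradient (pf Complex.imCLM v δ) y) := hYi.add hg2
    rw [Wf, Wf, h1, convKv_add hR (int_jcur β hR v) hs, convKv_add hR hYi hg2, convKv_smul, divK hR]
    ring
  have hYn : ∀ y, ‖Y y‖ ≤ (c1 * nn δ) * ‖u y‖ ^ 2 + c2 * (‖δ y‖ * ‖u y‖ + ‖δ y‖ * ‖v y‖)
      + 2 * ((‖δ y‖ * ‖dj 0 u y‖ + ‖δ y‖ * ‖dj 0 v y‖) + (‖δ y‖ * ‖dj 1 u y‖ + ‖δ y‖ * ‖dj 1 v y‖)) := by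
    intro y
    have hab : |‖u y‖ ^ 2 - ‖v y‖ ^ 2| ≤ ‖δ y‖ * (‖u y‖ + ‖v y‖) := by
      have h1 : |‖u y‖ - ‖v y‖| ≤ ‖δ y‖ := by
        rw [hδ, sub_apply]; exact abs_norm_sub_norm_le _ _
      have h2 : ‖u y‖ ^ 2 - ‖v y‖ ^ 2 = (‖u y‖ - ‖v y‖) * (‖u y‖ + ‖v y‖) := by ring
      rw [h2, abs_mul, abs_of_nonneg (a := ‖u y‖ + ‖v y‖) (by positivity)]
      gcongr
    have hAv : ‖Apot R v y‖ ≤ R⁻¹ * M ^ 2 :=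
      (norm_A_le hR v y).trans (by have := nn_nonneg v; gcongr; exact hv.1)
    have hAd := A_sub_le hR hu.1 hv.1 y
    refine (norm_add_le _ _).trans (add_le_add ?_ ?_)
    · rw [norm_smul]
      calc _ ≤ ‖2 * β‖ * (‖u y‖ ^ 2 * (4 * R⁻¹ * M * nn δ) + (‖δ y‖ * (‖u y‖ + ‖v y‖)) * (R⁻¹ * M ^ 2)) := by
            gcongr
            refine (norm_add_le _ _).trans (add_le_add ?_ ?_)
            · rw [norm_smul]
              simp only [norm_pow, norm_norm]
              gcongr
            · rw [norm_smul]
              gcongr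
              exact hab
        _ = _ := by simp only [norm_mul, Real.norm_eq_abs, abs_two, c1, c2]; ring
    · refine (norm_le_coord _).trans ?_
      simp only [abs_mul, abs_two]
      have hz : ∀ j, |((starRingEnd ℂ) (δ y) * (dj j u y + dj j v y)).im|
          ≤ ‖δ y‖ * ‖dj j u y‖ + ‖δ y‖ * ‖dj j v y‖ := by
        intro j
        refine (Complex.abs_im_le_norm _).trans ?_
        rw [norm_mul, RCLike.norm_conj, ← mul_add]
        gcongr
        exact norm_add_le _ _
      have := hz 0
      have := hz 1
      linarith
  have hiu := (L2s δ).int_norm_mul (L2s u)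
  have hiv := (L2s δ).int_norm_mul (L2s v)
  have hi0u := (L2s δ).int_norm_mul (L2d 0 u)
  have hi0v := (L2s δ).int_norm_mul (L2d 0 v)
  have hi1u := (L2s δ).int_norm_mul (L2d 1 u)
  have hi1v := (L2s δ).int_norm_mul (L2d 1 v)
  have hn := nn_nonneg δ
  have hcs : ∀ {f : E2 → ℂ}, L2f f → nn f ≤ M → ∫ y, ‖δ y‖ * ‖f y‖ ≤ nn δ * M :=
    fun hf hfM => (cs (L2s δ) hf).trans (by gcongr)
  have hYint : ∫ y, ‖Y y‖ ≤ (c1 * M ^ 2 + c2 * (2 * M) + 8 * M) * nn δ := by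
    calc ∫ y, ‖Y y‖ ≤ _ := integral_mono hYi.norm
          ((((L2s u).int_sq.const_mul _).add ((hiu.add hiv).const_mul _)).add
            (((hi0u.add hi0v).add (hi1u.add hi1v)).const_mul 2)) hYn
      _ = (c1 * nn δ) * (nn u ^ 2) + c2 * ((∫ y, ‖δ y‖ * ‖u y‖) + ∫ y, ‖δ y‖ * ‖v y‖)
        + 2 * (((∫ y, ‖δ y‖ * ‖dj 0 u y‖) + ∫ y, ‖δ y‖ * ‖dj 0 v y‖) + ((∫ y, ‖δ y‖ * ‖dj 1 u y‖) +
          ∫ y, ‖δ y‖ * ‖dj 1 v y‖)) := by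
          rw [integral_add' (((L2s u).int_sq.const_mul _).add ((hiu.add hiv).const_mul _))
              (((hi0u.add hi0v).add (hi1u.add hi1v)).const_mul 2),
            integral_add' ((L2s u).int_sq.const_mul _) ((hiu.add hiv).const_mul _)]
          simp only [Pi.add_apply, integral_const_mul]
          have ha : Integrable (fun y => ‖δ y‖ * ‖dj 0 u y‖ + ‖δ y‖ * ‖dj 0 v y‖) := hi0u.add hi0v
          have hb : Integrable (fun y => ‖δ y‖ * ‖dj 1 u y‖ + ‖δ y‖ * ‖dj 1 v y‖) := hi1u.add hi1v
          rw [integral_add hiu hiv, integral_add ha hb]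
          rw [integral_add hi0u hi0v, integral_add hi1u hi1v, nn_sq]
      _ ≤ (c1 * nn δ) * (M ^ 2) + c2 * (nn δ * M + nn δ * M)
        + 2 * ((nn δ * M + nn δ * M) + (nn δ * M + nn δ * M)) := by
          have hnu := nn_nonneg u
          gcongr
          · exact hu.1
          · exact hcs (L2s u) hu.1
          · exact hcs (L2s v) hv.1
          · exact hcs (L2d 0 u) (hu.2 0)
          · exact hcs (L2d 0 v) (hv.2 0)
          · exact hcs (L2d 1 u) (hu.2 1)
          · exact hcs (L2d 1 v) (hv.2 1)
      _ = _ := by ring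
  rw [hW, abs_mul, abs_neg]
  calc |β| * |convKv R Y x| ≤ |β| * (R⁻¹ * ((c1 * M ^ 2 + c2 * (2 * M) + 8 * M) * nn δ)) := by
        gcongr
        exact (abs_convKv_le hR hYi x).trans (by gcongr)
    _ = _ := by ring

end A

/-! ### Stability estimate -/

lemma intadd {f g : E2 → ℝ} (hf : Integrable f) (hg : Integrable g) :
    Integrable (fun x => f x + g x) := hf.add hg

section B
variable {R : ℝ}

/-- the total scalar potential -/
def Vf (β R : ℝ) (u : E2 → ℂ) (x : E2) : ℝ := β ^ 2 * ‖Apot R u x‖ ^ 2 + Wf β R u x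

lemma continuous_V (β : ℝ) (hR : 0 < R) (u : SchwartzMap E2 ℂ) : Continuous (Vf β R u) := by
  have := continuous_A hR u
  have := continuous_W β hR u
  unfold Vf
  fun_prop

lemma V_bdd (β : ℝ) (hR : 0 < R) (u : SchwartzMap E2 ℂ) : ∃ c, ∀ x, ‖((Vf β R u x : ℝ) : ℂ)‖ ≤ c := by
  obtain ⟨c, hc⟩ := W_bdd β hR u
  refine ⟨β ^ 2 * (R⁻¹ * nn u ^ 2) ^ 2 + c, fun x => ?_⟩
  rw [Complex.norm_real]
  refine (norm_add_le _ _).trans (add_le_add ?_ (hc x))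
  rw [Real.norm_of_nonneg (by positivity)]
  gcongr
  exact norm_A_le hR u x

lemma css_eq (β : ℝ) (u : SchwartzMap E2 ℂ) (x : E2) :
    cssRHS β R u x = -(lap u x) + (-2 * β * Complex.I) *
      (((Apot R u x 0 : ℝ) : ℂ) * dj 0 u x + ((Apot R u x 1 : ℝ) : ℂ) * dj 1 u x)
      + ((Vf β R u x : ℝ) : ℂ) * u x := by
  unfold cssRHS
  rw [fderiv_coord (fderiv ℝ u x) (Apot R u x)]
  simp only [Vf, Wf, dj, Complex.real_smul]
  have : (fun y => (2 * β * ‖u y‖ ^ 2) • Apot R u y + Jf u y) = jcur β R u := rfl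
  rw [this]
  push_cast
  ring

lemma continuous_Ac (hR : 0 < R) (u : SchwartzMap E2 ℂ) (j : Fin 2) :
    Continuous (fun x => ((Apot R u x j : ℝ) : ℂ)) := by
  have := continuous_A hR u
  fun_prop

lemma Ac_le (hR : 0 < R) (u : SchwartzMap E2 ℂ) (j : Fin 2) (x : E2) :
    ‖((Apot R u x j : ℝ) : ℂ)‖ ≤ R⁻¹ * nn u ^ 2 := by
  rw [Complex.norm_real]
  exact (coord_le_norm _ j).trans (norm_A_le hR u x)

lemma L2css (β : ℝ) (hR : 0 < R) (u : SchwartzMap E2 ℂ) : L2f (cssRHS β R u) := by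
  obtain ⟨c, hc⟩ := V_bdd β hR u
  have : cssRHS β R u = fun x => -(lap u x) + (-2 * β * Complex.I) *
      (((Apot R u x 0 : ℝ) : ℂ) * dj 0 u x + ((Apot R u x 1 : ℝ) : ℂ) * dj 1 u x)
      + ((Vf β R u x : ℝ) : ℂ) * u x := funext (css_eq β u)
  rw [this]
  exact ((L2lap u).neg.add (L2f.const_mul' (((L2d 0 u).cmul (continuous_Ac hR u 0) (Ac_le hR u 0)).add
    ((L2d 1 u).cmul (continuous_Ac hR u 1) (Ac_le hR u 1))) _)).add
    ((L2s u).cmul (Complex.continuous_ofReal.comp (continuous_V β hR u)) hc)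

lemma V_diff (β : ℝ) (hR : 0 < R) (M : ℝ) : ∃ C, 0 ≤ C ∧ ∀ u v : SchwartzMap E2 ℂ, Bd M u → Bd M v →
    ∀ x, |Vf β R u x - Vf β R v x| ≤ C * nn (⇑(u - v)) := by
  obtain ⟨C, hC, h⟩ := W_diff β hR M
  refine ⟨β ^ 2 * (4 * R⁻¹ * |M| * (R⁻¹ * M ^ 2 + R⁻¹ * M ^ 2)) + C, by positivity, fun u v hu hv x => ?_⟩
  have hM := hu.nonneg
  have hn := nn_nonneg (⇑(u - v))
  rw [abs_of_nonneg hM]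
  have hA := A_sub_le hR hu.1 hv.1 x
  have hAu : ‖Apot R u x‖ ≤ R⁻¹ * M ^ 2 :=
      (norm_A_le hR u x).trans (by have := nn_nonneg u; gcongr; exact hu.1)
  have hAv : ‖Apot R v x‖ ≤ R⁻¹ * M ^ 2 :=
      (norm_A_le hR v x).trans (by have := nn_nonneg v; gcongr; exact hv.1)
  have h1 : |‖Apot R u x‖ ^ 2 - ‖Apot R v x‖ ^ 2| ≤ (4 * R⁻¹ * M * nn (⇑(u - v))) * (R⁻¹ * M ^ 2 + R⁻¹ * M ^ 2) := by
    rw [sq_sub_sq, mul_comm, abs_mul, abs_of_nonneg (a := ‖Apot R u x‖ + _) (by positivity)]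
    gcongr
    exact (abs_norm_sub_norm_le _ _).trans hA
  have h2 : Vf β R u x - Vf β R v x = β ^ 2 * (‖Apot R u x‖ ^ 2 - ‖Apot R v x‖ ^ 2)
      + (Wf β R u x - Wf β R v x) := by unfold Vf; ring
  rw [h2]
  refine (abs_add_le _ _).trans ?_
  rw [abs_mul, abs_of_nonneg (sq_nonneg β)]
  have h3 := h u v hu hv x
  have h4 := mul_le_mul_of_nonneg_left h1 (sq_nonneg β)
  calc _ ≤ β ^ 2 * ((4 * R⁻¹ * M * nn (⇑(u - v))) * (R⁻¹ * M ^ 2 + R⁻¹ * M ^ 2)) + C * nn (⇑(u - v)) := add_le_add h4 h3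
    _ = _ := by ring

lemma dj_smul (j : Fin 2) (c : ℂ) (f : SchwartzMap E2 ℂ) (x : E2) : dj j (⇑(c • f)) x = c * dj j f x := by
  have : ⇑(c • f) = c • ⇑f := by ext; simp
  unfold dj
  rw [this, fderiv_const_smul f.differentiableAt]; rfl

lemma lap_eq (f : SchwartzMap E2 ℂ) (x : E2) : lap f x = dj 0 (dj 0 f) x + dj 1 (dj 1 f) x := by
  rw [lap, Fin.sum_univ_two]; rfl

lemma L2dd (j : Fin 2) (f : SchwartzMap E2 ℂ) : L2f (dj j (dj j f)) := by
  rw [← sdj_coe j f]; exact L2d j _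

lemma ip_lap (f g : SchwartzMap E2 ℂ) : ip (lap f) g = - (ip (dj 0 f) (dj 0 g) + ip (dj 1 f) (dj 1 g)) := by
  have h : lap f = fun x => dj 0 (dj 0 f) x + dj 1 (dj 1 f) x := funext (lap_eq f)
  rw [h, ip_comm, ip_add_right (L2s g) (L2dd 0 f) (L2dd 1 f), ip_comm g, ip_comm g, ip_dj_dj, ip_dj_dj]
  ring

lemma ip_I_self (f : E2 → ℂ) : ip f (fun x => Complex.I * f x) = 0 := by
  unfold ip
  have : (fun x => ((starRingEnd ℂ) (f x) * (Complex.I * f x)).re) = fun _ => 0 := by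
    ext x; simp; ring
  rw [this]; simp

lemma ip_I_lap (f : SchwartzMap E2 ℂ) : ip f (fun x => Complex.I * lap f x) = 0 := by
  have h1 : ip f (fun x => Complex.I * lap f x) = - ip (lap f) (⇑(Complex.I • f)) := by
    unfold ip; rw [← integral_neg]; congr 1; ext x; simp; ring
  have h2 : ∀ j, dj j (⇑(Complex.I • f)) = fun x => Complex.I * dj j f x := fun j => funext (dj_smul j _ f)
  rw [h1, ip_lap, h2, h2, ip_I_self, ip_I_self]; simp

lemma L2VI (β : ℝ) (hR : 0 < R) (u v f : SchwartzMap E2 ℂ) :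
    L2f (fun x => ((Vf β R u x - Vf β R v x : ℝ) : ℂ) * f x) := by
  obtain ⟨c, hc⟩ := V_bdd β hR u
  obtain ⟨c', hc'⟩ := V_bdd β hR v
  have h1 := continuous_V β hR u
  have h2 := continuous_V β hR v
  refine L2f.cmul (L2s f) (a := fun x => ((Vf β R u x - Vf β R v x : ℝ) : ℂ)) (by fun_prop)
    (c := c + c') fun x => ?_
  push_cast
  exact (norm_sub_le _ _).trans (add_le_add (hc x) (hc' x))

lemma L2AI (hR : 0 < R) (u v : SchwartzMap E2 ℂ) {f : E2 → ℂ} (hf : L2f f) (j : Fin 2) :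
    L2f (fun x => ((Apot R u x j - Apot R v x j : ℝ) : ℂ) * f x) := by
  have h1 := continuous_A hR u
  have h2 := continuous_A hR v
  refine L2f.cmul hf (a := fun x => ((Apot R u x j - Apot R v x j : ℝ) : ℂ)) (by fun_prop)
    (c := R⁻¹ * nn u ^ 2 + R⁻¹ * nn v ^ 2) fun x => ?_
  push_cast
  exact (norm_sub_le _ _).trans (add_le_add (Ac_le hR u j x) (Ac_le hR v j x))

lemma stab (β : ℝ) (hR : 0 < R) (M : ℝ) : ∃ C, 0 ≤ C ∧ ∀ u v : SchwartzMap E2 ℂ, Bd M u → Bd M v →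
    |ip (⇑(u - v)) (fun x => -Complex.I * (cssRHS β R u x - cssRHS β R v x))| ≤ C * nn (⇑(u - v)) ^ 2 := by
  obtain ⟨C, hC, hV⟩ := V_diff β hR M
  refine ⟨2 * |β| * (4 * R⁻¹ * |M|) * (|M| + |M|) + C * |M|, by positivity, fun u v hu hv => ?_⟩
  have hM := hu.nonneg
  set δ := u - v with hδ
  have hn := nn_nonneg δ
  rw [abs_of_nonneg hM]
  let Q1 : E2 → ℂ := fun x => ((Apot R u x 0 - Apot R v x 0 : ℝ) : ℂ) * dj 0 v x
  let Q2 : E2 → ℂ := fun x => ((Apot R u x 1 - Apot R v x 1 : ℝ) : ℂ) * dj 1 v x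
  let Q3 : E2 → ℂ := fun x => ((Vf β R u x - Vf β R v x : ℝ) : ℂ) * v x
  have hQ1 : L2f Q1 := L2AI hR u v (L2d 0 v) 0
  have hQ2 : L2f Q2 := L2AI hR u v (L2d 1 v) 1
  have hQ3 : L2f Q3 := L2VI β hR u v v
  have hAd : ∀ x j, ‖((Apot R u x j - Apot R v x j : ℝ) : ℂ)‖ ≤ 4 * R⁻¹ * M * nn δ := by
    intro x j
    rw [Complex.norm_real]
    exact (coord_le_norm (Apot R u x - Apot R v x) j).trans (A_sub_le hR hu.1 hv.1 x)
  have nQ1 : nn Q1 ≤ (4 * R⁻¹ * M * nn δ) * M := by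
    refine (nn_le_of_le (L2d 0 v) (c := 4 * R⁻¹ * M * nn δ) (by positivity) fun x => ?_).trans
      (mul_le_mul_of_nonneg_left (hv.2 0) (by positivity))
    rw [norm_mul]; gcongr; exact hAd x 0
  have nQ2 : nn Q2 ≤ (4 * R⁻¹ * M * nn δ) * M := by
    refine (nn_le_of_le (L2d 1 v) (c := 4 * R⁻¹ * M * nn δ) (by positivity) fun x => ?_).trans
      (mul_le_mul_of_nonneg_left (hv.2 1) (by positivity))
    rw [norm_mul]; gcongr; exact hAd x 1
  have nQ3 : nn Q3 ≤ (C * nn δ) * M := by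
    refine (nn_le_of_le (L2s v) (c := C * nn δ) (by positivity) fun x => ?_).trans
      (mul_le_mul_of_nonneg_left hv.1 (by positivity))
    rw [norm_mul]; gcongr; rw [Complex.norm_real]; exact hV u v hu hv x
  have key : ip δ (fun x => -Complex.I * (cssRHS β R u x - cssRHS β R v x)) =
      ip δ (fun x => Complex.I * lap δ x)
      + (-β) * (∫ x, (Apot R u x 0 * dpf Complex.reCLM δ δ 0 x + Apot R u x 1 * dpf Complex.reCLM δ δ 1 x))
      + ((-2 * β) * ip δ Q1 + (-2 * β) * ip δ Q2) + ip δ (fun x => -Complex.I * Q3 x) := by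
    have hi0 : Integrable (fun x => ((starRingEnd ℂ) (δ x) * (Complex.I * lap δ x)).re) :=
      (L2s δ).int_ip ((L2lap δ).const_mul' _)
    have hb : ∀ j, Integrable (fun x => Apot R u x j * dpf Complex.reCLM δ δ j x) := fun j => by
      refine Integrable.bdd_mul (c := R⁻¹ * nn u ^ 2) (dpf_int _ δ δ j) ?_ (Filter.Eventually.of_forall fun x => ?_)
      · have := continuous_A hR u
        exact Continuous.aestronglyMeasurable (by fun_prop)
      · exact (coord_le_norm _ j).trans (norm_A_le hR u x)
    have hi1 : Integrable (fun x => -β * (Apot R u x 0 * dpf Complex.reCLM δ δ 0 x + Apot R u x 1 * dpf Complex.reCLM δ δ 1 x)) :=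
      ((hb 0).add (hb 1)).const_mul _
    have hi2 : Integrable (fun x => -2 * β * ((starRingEnd ℂ) (δ x) * Q1 x).re) := ((L2s δ).int_ip hQ1).const_mul _
    have hi3 : Integrable (fun x => -2 * β * ((starRingEnd ℂ) (δ x) * Q2 x).re) := ((L2s δ).int_ip hQ2).const_mul _
    have hi4 : Integrable (fun x => ((starRingEnd ℂ) (δ x) * (-Complex.I * Q3 x)).re) :=
      (L2s δ).int_ip (hQ3.const_mul' _)
    have hi23 : Integrable (fun x => -2 * β * ((starRingEnd ℂ) (δ x) * Q1 x).re + -2 * β * ((starRingEnd ℂ) (δ x) * Q2 x).re) := hi2.add hi3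
    have hi01 := intadd hi0 hi1
    have hi0123 := intadd hi01 hi23
    unfold ip
    rw [← integral_const_mul, ← integral_const_mul, ← integral_const_mul, ← integral_add hi2 hi3,
      ← integral_add hi0 hi1, ← integral_add hi01 hi23, ← integral_add hi0123 hi4]
    congr 1; ext x
    beta_reduce
    rw [css_eq, css_eq]
    simp only [Q1, Q2, Q3, dpf, hδ, lap_sub, dj_sub, sub_apply, Pi.add_apply, Complex.reCLM_apply]
    simp
    ring
  have hd : ∫ x, (Apot R u x 0 * dpf Complex.reCLM δ δ 0 x + Apot R u x 1 * dpf Complex.reCLM δ δ 1 x) = 0 :=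
    divA hR (L2s u).int_sq _ _ _
  rw [key, ip_I_lap, hd]
  have a1 := abs_ip_le (L2s δ) hQ1
  have a2 := abs_ip_le (L2s δ) hQ2
  have a3 := abs_ip_le (L2s δ) (hQ3.const_mul' (-Complex.I))
  rw [nn_const_mul, norm_neg, Complex.norm_I, one_mul] at a3
  have b1 : |(-2 * β) * ip δ Q1| ≤ (2 * |β|) * (nn δ * ((4 * R⁻¹ * M * nn δ) * M)) := by
    rw [abs_mul, abs_mul, abs_neg, abs_two]
    gcongr; exact a1.trans (by gcongr)
  have b2 : |(-2 * β) * ip δ Q2| ≤ (2 * |β|) * (nn δ * ((4 * R⁻¹ * M * nn δ) * M)) := by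
    rw [abs_mul, abs_mul, abs_neg, abs_two]
    gcongr; exact a2.trans (by gcongr)
  have b3 := a3.trans (mul_le_mul_of_nonneg_left nQ3 hn)
  rw [zero_add, mul_zero, zero_add]
  refine (abs_add_le _ _).trans ((add_le_add (abs_add_le _ _) le_rfl).trans ?_)
  refine (add_le_add (add_le_add b1 b2) b3).trans (le_of_eq ?_)
  ring

end B

/-! ### Energy expansion -/

section C
variable {R : ℝ}

/-- covariant derivative -/
def Dc (β R : ℝ) (u : E2 → ℂ) (j : Fin 2) (x : E2) : ℂ :=
  -Complex.I * dj j u x + ((β * Apot R u x j : ℝ) : ℂ) * u x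

lemma L2Au (β : ℝ) (hR : 0 < R) (u : SchwartzMap E2 ℂ) {f : E2 → ℂ} (hf : L2f f) (j : Fin 2) :
    L2f (fun x => ((β * Apot R u x j : ℝ) : ℂ) * f x) := by
  have h1 := continuous_A hR u
  refine L2f.cmul hf (a := fun x => ((β * Apot R u x j : ℝ) : ℂ)) (by fun_prop)
    (c := |β| * (R⁻¹ * nn u ^ 2)) fun x => ?_
  push_cast
  rw [norm_mul]
  gcongr
  · simp
  · exact Ac_le hR u j x

lemma L2Dc (β : ℝ) (hR : 0 < R) (u : SchwartzMap E2 ℂ) (j : Fin 2) : L2f (Dc β R u j) :=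
  ((L2d j u).const_mul' _).add (L2Au β hR u (L2s u) j)

lemma nn_Au_le (β : ℝ) (hR : 0 < R) (u : SchwartzMap E2 ℂ) (j : Fin 2) :
    nn (fun x => ((β * Apot R u x j : ℝ) : ℂ) * u x) ≤ |β| * R⁻¹ * nn u ^ 3 := by
  refine (nn_le_of_le (L2s u) (c := |β| * (R⁻¹ * nn u ^ 2)) (by positivity) fun x => ?_).trans
    (le_of_eq (by ring))
  push_cast
  rw [norm_mul, norm_mul]
  gcongr
  · simp
  · exact Ac_le hR u j x

lemma nn_Dc_le (β : ℝ) (hR : 0 < R) (u : SchwartzMap E2 ℂ) (j : Fin 2) :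
    nn (Dc β R u j) ≤ nn (dj j u) + |β| * R⁻¹ * nn u ^ 3 := by
  have h := nn_add_le ((L2d j u).const_mul' (-Complex.I)) (L2Au β hR u (L2s u) j)
  rw [nn_const_mul, norm_neg, Complex.norm_I, one_mul] at h
  exact h.trans (add_le_add le_rfl (nn_Au_le β hR u j))

lemma nn_dj_le (β : ℝ) (hR : 0 < R) (u : SchwartzMap E2 ℂ) (j : Fin 2) :
    nn (dj j u) ≤ nn (Dc β R u j) + |β| * R⁻¹ * nn u ^ 3 := by
  have h := nn_sub_le (L2Dc β hR u j) (L2Au β hR u (L2s u) j)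
  have e : (fun x => Dc β R u j x - ((β * Apot R u x j : ℝ) : ℂ) * u x) = fun x => -Complex.I * dj j u x := by
    ext x; rw [Dc]; ring
  rw [e, nn_const_mul, norm_neg, Complex.norm_I, one_mul] at h
  exact h.trans (add_le_add le_rfl (nn_Au_le β hR u j))

lemma energy_eq (β : ℝ) (hR : 0 < R) (u : SchwartzMap E2 ℂ) :
    energy β R u = nn (Dc β R u 0) ^ 2 + nn (Dc β R u 1) ^ 2 := by
  rw [nn_sq, nn_sq, ← integral_add (L2Dc β hR u 0).int_sq (L2Dc β hR u 1).int_sq]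
  unfold energy
  congr 1; ext x
  rw [Fin.sum_univ_two]; rfl

lemma coercive (β : ℝ) (hR : 0 < R) (u : SchwartzMap E2 ℂ) :
    Bd (nn u + (√(energy β R u) + |β| * R⁻¹ * nn u ^ 3)) u := by
  have h0 := nn_nonneg u
  have hRi : 0 < R⁻¹ := by positivity
  refine ⟨?_, fun j => ?_⟩
  · have : 0 ≤ √(energy β R u) + |β| * R⁻¹ * nn u ^ 3 := by positivity
    linarith
  · have h1 := nn_dj_le β hR u j
    have h2 : nn (Dc β R u j) ≤ √(energy β R u) := by
      refine Real.le_sqrt_of_sq_le ?_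
      rw [energy_eq β hR u]
      fin_cases j
      · simpa using sq_nonneg _
      · simpa using sq_nonneg _
    linarith

lemma energy_nonneg (β : ℝ) (u : E2 → ℂ) : 0 ≤ energy β R u := by
  unfold energy; exact integral_nonneg fun x => by positivity

lemma energy_le (β : ℝ) (hR : 0 < R) {M : ℝ} (u : SchwartzMap E2 ℂ) (h : Bd M u) :
    energy β R u ≤ 2 * (M + |β| * R⁻¹ * M ^ 3) ^ 2 := by
  have h0 := nn_nonneg u
  have hM := h.nonneg
  have hRi : 0 < R⁻¹ := by positivity
  rw [energy_eq β hR u, two_mul]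
  have : ∀ j, nn (Dc β R u j) ≤ M + |β| * R⁻¹ * M ^ 3 := fun j =>
    (nn_Dc_le β hR u j).trans (add_le_add (h.2 j) (by gcongr; exact h.1))
  have a := nn_nonneg (Dc β R u 0)
  have b := nn_nonneg (Dc β R u 1)
  gcongr
  · exact this 0
  · exact this 1

lemma bd_mono {M M' : ℝ} {u : E2 → ℂ} (h : Bd M u) (hM : M ≤ M') : Bd M' u :=
  ⟨h.1.trans hM, fun j => (h.2 j).trans hM⟩

/-- bound coming from mass and energy -/
def coerB (β R m e : ℝ) : ℝ := m + (√e + |β| * R⁻¹ * m ^ 3)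

/-- density pairing of the current -/
lemma cur_id (β : ℝ) (hR : 0 < R) (g δ : SchwartzMap E2 ℂ) :
    β / 2 * (∫ x, ⟪convKs R (rho1 g δ) x, jcur β R g x⟫) =
      ip (fun x => ((Wf β R g x : ℝ) : ℂ) * g x) δ := by
  rw [fubini_conv hR (rho1_int (L2s g) (L2s δ)) (int_jcur β hR g), mul_neg, ← neg_mul, ← integral_const_mul]
  unfold ip
  congr 1; ext x
  simp [rho1, Wf]; ring

lemma int_A_mul (hR : 0 < R) {ρ : E2 → ℝ} (hρ : Integrable ρ) {φ : E2 → ℝ} (hφ : Integrable φ) (j : Fin 2) :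
    Integrable (fun x => convKs R ρ x j * φ x) := by
  refine Integrable.bdd_mul (c := R⁻¹ * ∫ y, |ρ y|) hφ ?_ (Filter.Eventually.of_forall fun x => ?_)
  · have := continuous_convKs hR hρ
    exact Continuous.aestronglyMeasurable (by fun_prop)
  · exact (coord_le_norm _ j).trans (norm_convKs_le hR hρ x)

lemma L2conv (hR : 0 < R) (β : ℝ) {ρ : E2 → ℝ} (hρ : Integrable ρ) {f : E2 → ℂ} (hf : L2f f) (j : Fin 2) :
    L2f (fun x => ((β * convKs R ρ x j : ℝ) : ℂ) * f x) := by
  have h1 := continuous_convKs hR hρ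
  refine L2f.cmul hf (a := fun x => ((β * convKs R ρ x j : ℝ) : ℂ)) (by fun_prop)
    (c := |β| * (R⁻¹ * ∫ y, |ρ y|)) fun x => ?_
  rw [Complex.norm_real, norm_mul]
  gcongr
  · simp
  · exact (coord_le_norm _ j).trans (norm_convKs_le hR hρ x)

/-- leading part of the first variation -/
def F1 (β R : ℝ) (g δ : E2 → ℂ) (j : Fin 2) (x : E2) : ℂ :=
  (-Complex.I * dj j δ x + ((β * Apot R g x j : ℝ) : ℂ) * δ x)
    + ((β * convKs R (rho1 g δ) x j : ℝ) : ℂ) * g x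

lemma L2F1 (β : ℝ) (hR : 0 < R) (g δ : SchwartzMap E2 ℂ) (j : Fin 2) : L2f (F1 β R g δ j) :=
  (((L2d j δ).const_mul' _).add (L2Au β hR g (L2s δ) j)).add
    (L2conv hR β (rho1_int (L2s g) (L2s δ)) (L2s g) j)

lemma first_var (β : ℝ) (hR : 0 < R) (g δ : SchwartzMap E2 ℂ) :
    ip (Dc β R g 0) (F1 β R g δ 0) + ip (Dc β R g 1) (F1 β R g δ 1) = ip (cssRHS β R g) δ := by
  have hρ := rho1_int (L2s g) (L2s δ)
  have hd : ∫ x, (Apot R g x 0 * dpf Complex.imCLM g δ 0 x + Apot R g x 1 * dpf Complex.imCLM g δ 1 x) = 0 :=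
    divA hR (L2s g).int_sq _ _ _
  have hl := ip_lap g δ
  have hc := cur_id β hR g δ
  have hb : ∀ j, Integrable (fun x => Apot R g x j * dpf Complex.imCLM g δ j x) := fun j =>
    int_A_mul hR (L2s g).int_sq (dpf_int _ g δ j) j
  have i1 : Integrable (fun x => β * (Apot R g x 0 * dpf Complex.imCLM g δ 0 x
      + Apot R g x 1 * dpf Complex.imCLM g δ 1 x)) := (intadd (hb 0) (hb 1)).const_mul β
  have i2 : Integrable (fun x => β / 2 * ⟪convKs R (rho1 g δ) x, jcur β R g x⟫) := by
    have hj : ∀ j, Integrable (fun x => jcur β R g x j) := fun j =>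
      Integrable.mono' (int_jcur β hR g).norm (by
        have := continuous_jcur β hR g
        exact Continuous.aestronglyMeasurable (by fun_prop))
        (Filter.Eventually.of_forall fun x => coord_le_norm _ j)
    simp only [inner_coord]
    exact (intadd (int_A_mul hR hρ (hj 0) 0) (int_A_mul hR hρ (hj 1) 1)).const_mul _
  have i3 := (L2d 0 g).int_ip (L2d 0 δ)
  have i4 := (L2d 1 g).int_ip (L2d 1 δ)
  have i5 := (L2lap g).int_ip (L2s δ)
  obtain ⟨c, hcW⟩ := W_bdd β hR g
  have hWL : L2f (fun x => ((Wf β R g x : ℝ) : ℂ) * g x) := by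
    have := continuous_W β hR g
    exact (L2s g).cmul (a := fun x => ((Wf β R g x : ℝ) : ℂ)) (by fun_prop) (c := c)
      (fun x => by rw [Complex.norm_real]; exact hcW x)
  have i6 := hWL.int_ip (L2s δ)
  have j0 := (L2Dc β hR g 0).int_ip (L2F1 β hR g δ 0)
  have j1 := (L2Dc β hR g 1).int_ip (L2F1 β hR g δ 1)
  have j2 := (L2css β hR g).int_ip (L2s δ)
  rw [← integral_const_mul] at hc
  have hd' : ∫ x, β * (Apot R g x 0 * dpf Complex.imCLM g δ 0 x + Apot R g x 1 * dpf Complex.imCLM g δ 1 x) = 0 := by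
    rw [integral_const_mul, hd, mul_zero]
  -- pointwise identity
  have hpt : ∀ x, (((starRingEnd ℂ) (Dc β R g 0 x) * F1 β R g δ 0 x).re
      + ((starRingEnd ℂ) (Dc β R g 1 x) * F1 β R g δ 1 x).re)
      + (((starRingEnd ℂ) ((((Wf β R g x : ℝ) : ℂ) * g x)) * δ x).re)
      = ((((starRingEnd ℂ) (cssRHS β R g x) * δ x).re + ((starRingEnd ℂ) (lap g x) * δ x).re)
      + (((starRingEnd ℂ) (dj 0 g x) * dj 0 δ x).re + ((starRingEnd ℂ) (dj 1 g x) * dj 1 δ x).re))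
      + (β * (Apot R g x 0 * dpf Complex.imCLM g δ 0 x + Apot R g x 1 * dpf Complex.imCLM g δ 1 x)
        + β / 2 * ⟪convKs R (rho1 g δ) x, jcur β R g x⟫) := by
    intro x
    have hA2 : ‖Apot R g x‖ ^ 2 = Apot R g x 0 ^ 2 + Apot R g x 1 ^ 2 := by
      rw [EuclideanSpace.real_norm_sq_eq, Fin.sum_univ_two]
    have hg2 : ‖g x‖ ^ 2 = (g x).re ^ 2 + (g x).im ^ 2 := by
      rw [← Complex.normSq_eq_norm_sq, Complex.normSq_apply]; ring
    rw [css_eq, inner_coord]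
    simp only [Dc, F1, jcur, PiLp.add_apply, PiLp.smul_apply, Jf_coord, dpf, Vf, hA2, hg2, smul_eq_mul,
      Complex.imCLM_apply, Complex.mul_im, Complex.mul_re, Complex.add_im, Complex.add_re,
      Complex.neg_re, Complex.neg_im, Complex.I_re, Complex.I_im, Complex.ofReal_re, Complex.ofReal_im,
      Complex.conj_re, Complex.conj_im, Complex.re_ofNat, Complex.im_ofNat]
    ring
  have hintg := congrArg (fun f : E2 → ℝ => ∫ x, f x) (funext hpt)
  beta_reduce at hintg
  rw [integral_add (intadd j0 j1) i6, integral_add j0 j1,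
    integral_add (intadd (intadd j2 i5) (intadd i3 i4)) (intadd i1 i2),
    integral_add (intadd j2 i5) (intadd i3 i4), integral_add j2 i5, integral_add i3 i4,
    integral_add i1 i2, hc, hd'] at hintg
  unfold ip at *
  linarith

lemma energyLow (β : ℝ) (hR : 0 < R) (M : ℝ) : ∃ C, 0 ≤ C ∧ ∀ u g : SchwartzMap E2 ℂ, nn u ≤ M → Bd M g →
    energy β R g + 2 * ip (cssRHS β R g) (⇑(u - g)) - C * nn (⇑(u - g)) ^ 2 ≤ energy β R u := by
  let p : ℝ := |M| + |β| * R⁻¹ * |M| ^ 3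
  let q : ℝ := |β| * R⁻¹ * |M| + |β| * (4 * R⁻¹ * |M|)
  refine ⟨2 * (p * q + p * q), by positivity, fun u g hu hg => ?_⟩
  have hM := hg.nonneg
  have hRi : 0 < R⁻¹ := by positivity
  set δ := u - g with hδ
  have hn := nn_nonneg δ
  let H : Fin 2 → E2 → ℂ := fun j x => ((β * convKs R (fun y => ‖δ y‖ ^ 2) x j : ℝ) : ℂ) * g x
    + (β : ℂ) * (((Apot R u x j - Apot R g x j : ℝ) : ℂ) * δ x)
  have hH1 : ∀ j, L2f (fun x => ((β * convKs R (fun y => ‖δ y‖ ^ 2) x j : ℝ) : ℂ) * g x) :=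
    fun j => L2conv hR β (L2s δ).int_sq (L2s g) j
  have hH2 : ∀ j, L2f (fun x => (β : ℂ) * (((Apot R u x j - Apot R g x j : ℝ) : ℂ) * δ x)) :=
    fun j => (L2AI hR u g (L2s δ) j).const_mul' _
  have hH : ∀ j, L2f (H j) := fun j => (hH1 j).add (hH2 j)
  have nH : ∀ j, nn (H j) ≤ q * nn δ ^ 2 := by
    intro j
    refine (nn_add_le (hH1 j) (hH2 j)).trans ?_
    have a1 : nn (fun x => ((β * convKs R (fun y => ‖δ y‖ ^ 2) x j : ℝ) : ℂ) * g x)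
        ≤ (|β| * (R⁻¹ * nn δ ^ 2)) * |M| := by
      refine (nn_le_of_le (L2s g) (c := |β| * (R⁻¹ * nn δ ^ 2)) (by positivity) fun x => ?_).trans
        (mul_le_mul_of_nonneg_left (hg.1.trans (le_abs_self M)) (by positivity))
      rw [norm_mul, Complex.norm_real, norm_mul]
      gcongr
      · simp
      · exact (coord_le_norm _ j).trans (A2_le hR (L2s δ) x)
    have a2 : nn (fun x => (β : ℂ) * (((Apot R u x j - Apot R g x j : ℝ) : ℂ) * δ x))
        ≤ (|β| * (4 * R⁻¹ * |M| * nn δ)) * nn δ := by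
      refine nn_le_of_le (L2s δ) (by positivity) fun x => ?_
      rw [norm_mul, norm_mul, Complex.norm_real, Complex.norm_real, ← mul_assoc, abs_of_nonneg hM]
      gcongr
      · simp
      · exact (coord_le_norm (Apot R u x - Apot R g x) j).trans (A_sub_le hR hu hg.1 x)
    refine (add_le_add a1 a2).trans (le_of_eq ?_)
    simp only [q]; ring
  have nP : ∀ j, nn (Dc β R g j) ≤ p := fun j => by
    have := nn_nonneg g
    simp only [p, abs_of_nonneg hM]
    exact (nn_Dc_le β hR g j).trans (add_le_add (hg.2 j) (by gcongr; exact hg.1))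
  have hdec : ∀ j, Dc β R u j = fun x => Dc β R g j x + (F1 β R g δ j x + H j x) := by
    intro j; ext x
    have hA := A_sub hR u g x
    have hAj : Apot R u x j = Apot R g x j + (convKs R (rho1 g δ) x j + convKs R (fun y => ‖δ y‖ ^ 2) x j) := by
      rw [hA]; rfl
    have hdj := dj_sub j u g x
    have hs : δ x = u x - g x := by rw [hδ, sub_apply]
    have hu' : u x = g x + δ x := by rw [hs]; ring
    have hdu : dj j u x = dj j g x + dj j δ x := by rw [hδ, hdj]; ring
    simp only [Dc, F1, H]
    rw [hdu, hu', hAj]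
    push_cast
    ring
  have hq : ∀ j, nn (Dc β R u j) ^ 2 ≥ nn (Dc β R g j) ^ 2 + 2 * ip (Dc β R g j) (F1 β R g δ j) - 2 * (p * q * nn δ ^ 2) := by
    intro j
    have hF := L2F1 β hR g δ j
    have h1 := nn_add_sq (L2Dc β hR g j) (hF.add (hH j))
    have h2 := ip_add_right (L2Dc β hR g j) hF (hH j)
    have h3 := (abs_le.1 (abs_ip_le (L2Dc β hR g j) (hH j))).1
    have h4 : nn (Dc β R g j) * nn (H j) ≤ p * (q * nn δ ^ 2) := by
      have := nn_nonneg (H j)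
      have := nn_nonneg (Dc β R g j)
      gcongr
      · exact nP j
      · exact nH j
    have h5 : nn (fun x => Dc β R g j x + (F1 β R g δ j + H j) x) ^ 2 = nn (Dc β R u j) ^ 2 := by
      rw [hdec j]; rfl
    have h6 : ip (Dc β R g j) (F1 β R g δ j + H j) = ip (Dc β R g j) (fun x => F1 β R g δ j x + H j x) := rfl
    rw [h5, h6, h2] at h1
    rw [h1]
    nlinarith [sq_nonneg (nn (F1 β R g δ j + H j))]
  have := hq 0
  have := hq 1
  have hf := first_var β hR g δ
  rw [energy_eq β hR u, energy_eq β hR g, ← hf]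
  nlinarith

end C

/-! ### Time-dependent tools -/

open Filter Topology in
lemma weak_conv {ι : Type*} {l : Filter ι} [l.IsCountablyGenerated] {f : ι → E2 → ℂ} {f0 w : E2 → ℂ} {M : ℝ}
    (hf : ∀ᶠ n in l, L2f (f n) ∧ nn (f n) ≤ M) (hpt : ∀ x, Tendsto (fun n => f n x) l (𝓝 (f0 x)))
    (h0 : L2f f0) (hw : L2f w) : Tendsto (fun n => ip w (f n)) l (𝓝 (ip w f0)) := by
  rcases eq_or_neBot l with rfl | hl
  · exact tendsto_bot
  obtain ⟨n0, hn0⟩ := hf.exists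
  have hM : 0 ≤ M := (nn_nonneg _).trans hn0.2
  set M' := M + nn f0 with hM'
  have hM'0 : 0 ≤ M' := add_nonneg hM (nn_nonneg _)
  have hDCT : ∀ k : ℝ, 0 < k → Tendsto (fun n => ∫ x, min (‖w x‖ * ‖f n x - f0 x‖) (k * ‖w x‖ ^ 2)) l (𝓝 0) := by
    intro k hk
    have h := tendsto_integral_filter_of_dominated_convergence (μ := (volume : Measure E2)) (l := l)
      (F := fun n x => min (‖w x‖ * ‖f n x - f0 x‖) (k * ‖w x‖ ^ 2)) (f := fun _ => (0 : ℝ))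
      (fun x => k * ‖w x‖ ^ 2) ?_ ?_ (hw.int_sq.const_mul k) ?_
    · simpa using h
    · filter_upwards [hf] with n hn
      exact (hw.1.norm.mul (hn.1.1.sub h0.1).norm).inf ((hw.1.norm.pow 2).const_mul k)
    · refine Eventually.of_forall fun n => Eventually.of_forall fun x => ?_
      rw [Real.norm_of_nonneg (le_min (by positivity) (by positivity))]
      exact min_le_right _ _
    · refine Eventually.of_forall fun x => ?_
      have h1 : Tendsto (fun n => ‖w x‖ * ‖f n x - f0 x‖) l (𝓝 0) := by
        have := ((hpt x).sub_const (f0 x)).norm.const_mul ‖w x‖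
        simpa using this
      refine squeeze_zero (fun n => le_min (by positivity) (by positivity)) (fun n => min_le_left _ _) h1
  rw [Metric.tendsto_nhds]
  intro ε hε
  set k := 2 * (M' ^ 2 + 1) / ε with hk
  have hk0 : 0 < k := by positivity
  filter_upwards [hf, (hDCT k hk0).eventually (gt_mem_nhds (half_pos hε))] with n hn hlt
  have hg : L2f (fun x => f n x - f0 x) := hn.1.sub h0
  have hgn : nn (fun x => f n x - f0 x) ≤ M' := (nn_sub_le hn.1 h0).trans (by rw [hM']; linarith [hn.2])
  rw [Real.dist_eq, ← ip_sub_right hw hn.1 h0]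
  have hImin : Integrable (fun x => min (‖w x‖ * ‖f n x - f0 x‖) (k * ‖w x‖ ^ 2)) :=
    (hw.int_norm_mul hg).inf (hw.int_sq.const_mul k)
  have hIs : Integrable (fun x => k⁻¹ * ‖f n x - f0 x‖ ^ 2) := hg.int_sq.const_mul _
  calc |ip w (fun x => f n x - f0 x)| ≤ ∫ x, ‖w x‖ * ‖f n x - f0 x‖ := by
        refine (abs_integral_le_integral_abs).trans ?_
        refine integral_mono (hw.int_ip hg).abs (hw.int_norm_mul hg) fun x => ?_
        exact (Complex.abs_re_le_norm _).trans (by simp)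
    _ ≤ ∫ x, (min (‖w x‖ * ‖f n x - f0 x‖) (k * ‖w x‖ ^ 2) + k⁻¹ * ‖f n x - f0 x‖ ^ 2) := by
        refine integral_mono (hw.int_norm_mul hg) (intadd hImin hIs) fun x => ?_
        simp only
        rcases le_total (‖w x‖ * ‖f n x - f0 x‖) (k * ‖w x‖ ^ 2) with h | h
        · rw [min_eq_left h]
          have : 0 ≤ k⁻¹ * ‖f n x - f0 x‖ ^ 2 := by positivity
          linarith
        · rw [min_eq_right h]
          have h0 := norm_nonneg (w x)
          have h1 := norm_nonneg (f n x - f0 x)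
          set a := ‖w x‖
          set b := ‖f n x - f0 x‖
          have h3 : k * a ≤ b ∨ a = 0 := by
            rcases h0.eq_or_lt with h0 | h0
            · right; exact h0.symm
            · left
              have : a * (k * a) ≤ a * b := by nlinarith
              exact le_of_mul_le_mul_left this h0
          rcases h3 with h3 | h3
          · have h4 : a ≤ k⁻¹ * b := by rw [le_inv_mul_iff₀ hk0]; exact h3
            have : a * b ≤ k⁻¹ * b * b := by gcongr
            have h5 : 0 ≤ k * a ^ 2 := by positivity
            nlinarith
          · rw [h3]; simp only [zero_mul]; positivity
    _ = (∫ x, min (‖w x‖ * ‖f n x - f0 x‖) (k * ‖w x‖ ^ 2)) + k⁻¹ * nn (fun x => f n x - f0 x) ^ 2 := by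
        rw [integral_add hImin hIs, integral_const_mul, nn_sq]
    _ < ε / 2 + k⁻¹ * M' ^ 2 := by
        have := nn_nonneg (fun x => f n x - f0 x)
        exact add_lt_add_of_lt_of_le hlt (by gcongr)
    _ ≤ ε := by
        have : k⁻¹ * M' ^ 2 ≤ ε / 2 := by
          rw [inv_mul_le_iff₀ hk0, hk]
          have : 2 * (M' ^ 2 + 1) / ε * (ε / 2) = M' ^ 2 + 1 := by field_simp
          rw [this]; linarith
        linarith

open Filter Topology in
lemma nn_fatou {ι : Type*} {l : Filter ι} [l.IsCountablyGenerated] [l.NeBot] {f : ι → E2 → ℂ} {f0 : E2 → ℂ} {M : ℝ}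
    (hf : ∀ᶠ n in l, L2f (f n) ∧ nn (f n) ≤ M) (hpt : ∀ x, Tendsto (fun n => f n x) l (𝓝 (f0 x)))
    (h0 : L2f f0) : nn f0 ≤ M := by
  have h := weak_conv hf hpt h0 h0
  obtain ⟨n0, hn0⟩ := hf.exists
  have hM : 0 ≤ M := (nn_nonneg _).trans hn0.2
  have h1 : ip f0 f0 ≤ nn f0 * M := by
    refine le_of_tendsto h ?_
    filter_upwards [hf] with n hn
    exact (le_abs_self _).trans ((abs_ip_le h0 hn.1).trans (mul_le_mul_of_nonneg_left hn.2 (nn_nonneg _)))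
  rw [ip_self] at h1
  rcases (nn_nonneg f0).eq_or_lt with h2 | h2
  · rw [← h2]; exact hM
  · nlinarith

/-- A differentiable family of Schwartz functions. -/
structure Fl (w : ℝ → SchwartzMap E2 ℂ) (dw : ℝ → E2 → ℂ) : Prop where
  cont : Continuous fun p : ℝ × E2 => dw p.1 p.2
  der : ∀ t x, HasDerivAt (fun s => w s x) (dw t x) t
  L2 : ∀ t, L2f (dw t)

lemma sq_int_le {s t : ℝ} (hst : s ≤ t) {f : ℝ → ℝ} (hf : Continuous f) :
    (∫ r in s..t, f r) ^ 2 ≤ (t - s) * ∫ r in s..t, f r ^ 2 := by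
  rcases hst.eq_or_lt with rfl | hlt
  · simp
  set I := ∫ r in s..t, f r
  have hpos : 0 < t - s := by linarith
  have h := intervalIntegral.integral_nonneg hst (μ := volume) (f := fun r => ((t - s) * f r - I) ^ 2) fun r _ => sq_nonneg _
  have e : (fun r => ((t - s) * f r - I) ^ 2) = fun r => (t - s) ^ 2 * f r ^ 2 - 2 * (t - s) * I * f r + I ^ 2 := by
    ext r; ring
  rw [e, intervalIntegral.integral_add (Continuous.intervalIntegrable (by fun_prop) _ _)
    (Continuous.intervalIntegrable (by fun_prop) _ _), intervalIntegral.integral_sub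
    (Continuous.intervalIntegrable (by fun_prop) _ _)
    (Continuous.intervalIntegrable (by fun_prop) _ _), intervalIntegral.integral_const_mul,
    intervalIntegral.integral_const_mul, intervalIntegral.integral_const, smul_eq_mul] at h
  have h2 : 0 ≤ (t - s) * ((t - s) * (∫ r in s..t, f r ^ 2) - I ^ 2) := by
    calc 0 ≤ _ := h
      _ = _ := by simp only [I]; ring
  nlinarith [nonneg_of_mul_nonneg_right h2 hpos]

lemma Fl.lip_aux {w : ℝ → SchwartzMap E2 ℂ} {dw : ℝ → E2 → ℂ} (h : Fl w dw) {s t M : ℝ} (hst : s ≤ t)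
    (hM : ∀ r ∈ Set.Icc s t, nn (dw r) ≤ M) : nn (⇑(w t - w s)) ≤ M * (t - s) := by
  have hM0 : 0 ≤ M := (nn_nonneg _).trans (hM s ⟨le_rfl, hst⟩)
  have hts : 0 ≤ t - s := by linarith
  have hc : ∀ x, Continuous fun r => dw r x := fun x =>
    h.cont.comp (by fun_prop : Continuous fun r : ℝ => (r, x))
  have hp : ∀ x, ‖(w t - w s) x‖ ^ 2 ≤ (t - s) * ∫ r in s..t, ‖dw r x‖ ^ 2 := by
    intro x
    have h1 : (w t - w s) x = ∫ r in s..t, dw r x := by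
      rw [sub_apply]
      exact (intervalIntegral.integral_eq_sub_of_hasDerivAt (fun r _ => h.der r x)
        ((hc x).intervalIntegrable _ _)).symm
    have h2 : ‖(w t - w s) x‖ ≤ ∫ r in s..t, ‖dw r x‖ := by
      rw [h1]; exact intervalIntegral.norm_integral_le_integral_norm hst
    have h3 := sq_int_le hst (hc x).norm
    exact (by gcongr : ‖(w t - w s) x‖ ^ 2 ≤ (∫ r in s..t, ‖dw r x‖) ^ 2).trans h3
  have hl : ∫⁻ x, ENNReal.ofReal (‖(w t - w s) x‖ ^ 2) ≤ ENNReal.ofReal ((M * (t - s)) ^ 2) := by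
    calc ∫⁻ x, ENNReal.ofReal (‖(w t - w s) x‖ ^ 2)
        ≤ ∫⁻ x, ENNReal.ofReal (t - s) * ∫⁻ r in Set.Ioc s t, ENNReal.ofReal (‖dw r x‖ ^ 2) := by
          refine lintegral_mono fun x => ?_
          refine (ENNReal.ofReal_le_ofReal (hp x)).trans (le_of_eq ?_)
          rw [ENNReal.ofReal_mul hts, intervalIntegral.integral_of_le hst,
            ofReal_integral_eq_lintegral_ofReal]
          · have : Continuous fun r => ‖dw r x‖ ^ 2 := (hc x).norm.pow 2
            exact (this.integrableOn_Icc).mono_set Set.Ioc_subset_Icc_self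
          · exact Filter.Eventually.of_forall fun r => by positivity
      _ = ENNReal.ofReal (t - s) * ∫⁻ x, ∫⁻ r in Set.Ioc s t, ENNReal.ofReal (‖dw r x‖ ^ 2) := by
          rw [lintegral_const_mul' _ _ ENNReal.ofReal_ne_top]
      _ = ENNReal.ofReal (t - s) * ∫⁻ r in Set.Ioc s t, ∫⁻ x, ENNReal.ofReal (‖dw r x‖ ^ 2) := by
          rw [lintegral_lintegral_swap]
          have h1 : Continuous fun p : E2 × ℝ => dw p.2 p.1 :=
            h.cont.comp (by fun_prop : Continuous fun p : E2 × ℝ => (p.2, p.1))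
          have : Measurable (Function.uncurry fun (x : E2) (r : ℝ) => ENNReal.ofReal (‖dw r x‖ ^ 2)) :=
            (h1.norm.pow 2).measurable.ennreal_ofReal
          exact this.aemeasurable
      _ ≤ ENNReal.ofReal (t - s) * ∫⁻ r in Set.Ioc s t, ENNReal.ofReal (M ^ 2) := by
          gcongr ENNReal.ofReal (t - s) * ?_
          refine setLIntegral_mono measurable_const fun r hr => ?_
          rw [← ofReal_integral_eq_lintegral_ofReal (h.L2 r).int_sq
            (Filter.Eventually.of_forall fun r => by positivity), ← nn_sq]
          have := nn_nonneg (dw r)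
          gcongr
          exact hM r (Set.Ioc_subset_Icc_self hr)
      _ = _ := by
          rw [setLIntegral_const, Real.volume_Ioc, ← ENNReal.ofReal_mul (by positivity),
            ← ENNReal.ofReal_mul hts]
          congr 1; ring
  rw [← ofReal_integral_eq_lintegral_ofReal (L2s _).int_sq
            (Filter.Eventually.of_forall fun r => by positivity), ← nn_sq,
            ENNReal.ofReal_le_ofReal_iff (by positivity)] at hl
  exact le_of_sq_le_sq hl (by positivity)

lemma nn_sub_comm (u v : SchwartzMap E2 ℂ) : nn (⇑(u - v)) = nn (⇑(v - u)) := by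
  rw [← nn_neg]; congr 1; ext x; rw [sub_apply, sub_apply]; ring

lemma Fl.lip {w : ℝ → SchwartzMap E2 ℂ} {dw : ℝ → E2 → ℂ} (h : Fl w dw) {s t M : ℝ}
    (hM : ∀ r ∈ Set.uIcc s t, nn (dw r) ≤ M) : nn (⇑(w t - w s)) ≤ M * |t - s| := by
  rcases le_total s t with hst | hst
  · rw [Set.uIcc_of_le hst] at hM
    rw [abs_of_nonneg (by linarith)]; exact h.lip_aux hst hM
  · rw [Set.uIcc_of_ge hst] at hM
    rw [abs_sub_comm, abs_of_nonneg (by linarith), nn_sub_comm]; exact h.lip_aux hst hM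

open Filter Topology in
/-- difference quotients -/
lemma Fl.quot {w : ℝ → SchwartzMap E2 ℂ} {dw : ℝ → E2 → ℂ} (h : Fl w dw) {t M : ℝ}
    (hM : ∀ᶠ z in 𝓝 t, nn (dw z) ≤ M) :
    (∀ᶠ z in 𝓝 t, nn (⇑(w z - w t)) ≤ M * |z - t|) := by
  obtain ⟨ε, hε, hb⟩ := Metric.eventually_nhds_iff_ball.1 hM
  refine Metric.eventually_nhds_iff_ball.2 ⟨ε, hε, fun z hz => h.lip fun r hr => hb r ?_⟩
  have : (Metric.ball t ε).OrdConnected := by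
    rw [Real.ball_eq_Ioo]; exact Set.ordConnected_Ioo
  exact this.uIcc_subset (Metric.mem_ball_self hε) hz hr

open Filter Topology in
lemma Fl.weak {w : ℝ → SchwartzMap E2 ℂ} {dw : ℝ → E2 → ℂ} (h : Fl w dw) {t M : ℝ}
    (hM : ∀ᶠ z in 𝓝 t, nn (dw z) ≤ M) {φ : E2 → ℂ} (hφ : L2f φ) :
    Tendsto (fun z => (z - t)⁻¹ * ip φ (⇑(w z - w t))) (𝓝[≠] t) (𝓝 (ip φ (dw t))) := by
  have h1 := weak_conv (l := 𝓝[≠] t) (f := fun z x => (((z - t)⁻¹ : ℝ) : ℂ) * (w z - w t) x) (M := M) (f0 := dw t) (w := φ)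
    ?_ ?_ (h.L2 t) hφ
  · refine h1.congr fun z => ?_
    rw [ip_smul_right]
  · filter_upwards [self_mem_nhdsWithin, nhdsWithin_le_nhds (h.quot hM)] with z hz hq
    refine ⟨(L2s _).const_mul' _, ?_⟩
    rw [nn_const_mul, Complex.norm_real, norm_inv, Real.norm_eq_abs]
    have : 0 < |z - t| := abs_pos.2 (sub_ne_zero.2 hz)
    rw [inv_mul_le_iff₀ this, mul_comm]; exact hq
  · intro x
    have := (h.der t x).tendsto_slope
    refine this.congr fun z => ?_
    rw [slope_def_module, sub_apply, Complex.real_smul]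

open Filter Topology in
lemma Fl.deriv_sq {w : ℝ → SchwartzMap E2 ℂ} {dw : ℝ → E2 → ℂ} (h : Fl w dw) {t : ℝ}
    (hM : ∃ M, ∀ᶠ z in 𝓝 t, nn (dw z) ≤ M) :
    HasDerivAt (fun s => nn (w s) ^ 2) (2 * ip (w t) (dw t)) t := by
  obtain ⟨M, hM⟩ := hM
  rw [hasDerivAt_iff_tendsto_slope]
  have h1 := (h.weak hM (L2s (w t))).const_mul 2
  have h2 : Tendsto (fun z => (z - t)⁻¹ * nn (⇑(w z - w t)) ^ 2) (𝓝[≠] t) (𝓝 0) := by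
    have h3 : Tendsto (fun z : ℝ => M ^ 2 * |z - t|) (𝓝[≠] t) (𝓝 0) := by
      have : Tendsto (fun z : ℝ => M ^ 2 * |z - t|) (𝓝 t) (𝓝 (M ^ 2 * |t - t|)) := by
        apply Continuous.tendsto; fun_prop
      simp only [sub_self, abs_zero, mul_zero] at this
      exact this.mono_left nhdsWithin_le_nhds
    refine squeeze_zero_norm' ?_ h3
    filter_upwards [self_mem_nhdsWithin, nhdsWithin_le_nhds (h.quot hM)] with z hz hq
    have : 0 < |z - t| := abs_pos.2 (sub_ne_zero.2 hz)
    rw [norm_mul, norm_inv, Real.norm_eq_abs, inv_mul_le_iff₀ this, norm_pow,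
      Real.norm_of_nonneg (nn_nonneg _)]
    have h0 := nn_nonneg (⇑(w z - w t))
    calc nn (⇑(w z - w t)) ^ 2 ≤ (M * |z - t|) ^ 2 := by gcongr
      _ = _ := by ring
  have h3 := h1.add h2
  rw [add_zero] at h3
  refine h3.congr fun z => ?_
  have h4 := nn_add_sq (L2s (w t)) (L2s (w z - w t))
  have e : (fun x => w t x + (w z - w t) x) = w z := by ext x; rw [sub_apply]; ring
  rw [e] at h4
  rw [slope_def_field, h4]
  field_simp
  ring

/-- short time Gronwall -/
lemma gron {F F' : ℝ → ℝ} {s t C ρ : ℝ} (hF0 : ∀ r, 0 ≤ F r) (hC : 0 ≤ C)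
    (hd : ∀ r ∈ Set.uIcc s t, HasDerivAt F (F' r) r)
    (hb : ∀ r ∈ Set.uIcc s t, |F' r| ≤ 2 * C * F r + 2 * ρ * √(F r)) (hρ : 0 ≤ ρ)
    (hst : 8 * C * |t - s| ≤ 1) : F t ≤ 2 * F s + 8 * |t - s| ^ 2 * ρ ^ 2 := by
  have hcont : ContinuousOn F (Set.uIcc s t) := fun r hr => (hd r hr).continuousAt.continuousWithinAt
  obtain ⟨m, hm, hmax⟩ := isCompact_uIcc.exists_isMaxOn Set.nonempty_uIcc hcont
  have hFt : F t ≤ F m := hmax Set.right_mem_uIcc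
  have hy := Real.sqrt_nonneg (F m)
  have hys := Real.sq_sqrt (hF0 m)
  set y := √(F m)
  have hbd : ∀ r ∈ Set.uIcc s t, ‖F' r‖ ≤ 2 * C * F m + 2 * ρ * y := by
    intro r hr
    refine (hb r hr).trans ?_
    have h1 : F r ≤ F m := hmax hr
    have h2 : √(F r) ≤ y := Real.sqrt_le_sqrt h1
    gcongr
  have hmv := Convex.norm_image_sub_le_of_norm_hasDerivWithin_le
    (fun r hr => (hd r hr).hasDerivWithinAt) hbd (convex_uIcc s t) Set.left_mem_uIcc hm
  have h1 : |m - s| ≤ |t - s| := Set.abs_sub_left_of_mem_uIcc hm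
  have h0 : 0 ≤ 2 * C * F m + 2 * ρ * y := (norm_nonneg _).trans (hbd m hm)
  have h2 : F m - F s ≤ (2 * C * F m + 2 * ρ * y) * |t - s| :=
    (le_abs_self _).trans (hmv.trans (mul_le_mul_of_nonneg_left h1 h0))
  set τ := |t - s|
  have hτ : 0 ≤ τ := abs_nonneg _
  have h3 : 2 * C * F m * τ ≤ F m / 4 := by nlinarith [hF0 m]
  have h4 : 2 * ρ * y * τ ≤ F m / 4 + 4 * τ ^ 2 * ρ ^ 2 := by nlinarith [sq_nonneg (y / 2 - 2 * ρ * τ)]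
  nlinarith

/-! ### Solutions -/

/-- Smooth solutions -/
structure Sol (β R : ℝ) (u : ℝ → SchwartzMap E2 ℂ) (du : ℝ → E2 → ℂ) : Prop where
  joint : ContDiff ℝ (⊤ : ℕ∞) fun p : ℝ × E2 => u p.1 p.2
  der : ∀ t x, HasDerivAt (fun s => u s x) (du t x) t
  pde : ∀ t x, Complex.I * du t x = cssRHS β R (⇑(u t)) x

section S
open Filter Topology
variable {β R : ℝ} {u : ℝ → SchwartzMap E2 ℂ} {du : ℝ → E2 → ℂ}

lemma Sol.du_eq (h : Sol β R u du) (t : ℝ) (x : E2) : du t x = -Complex.I * cssRHS β R (u t) x := by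
  rw [← h.pde, ← mul_assoc]; simp

lemma Sol.css (h : Sol β R u du) (t : ℝ) : cssRHS β R (u t) = fun x => Complex.I * du t x :=
  funext fun x => (h.pde t x).symm

lemma Sol.nn_css (h : Sol β R u du) (t : ℝ) : nn (cssRHS β R (u t)) = nn (du t) := by
  rw [h.css, nn_const_mul, Complex.norm_I, one_mul]

lemma Sol.fl (h : Sol β R u du) (hR : 0 < R) : Fl u du where
  cont := by
    have hc := h.joint.continuous_fderiv (by simp)
    have : (fun p : ℝ × E2 => du p.1 p.2) =
        fun p => fderiv ℝ (fun p : ℝ × E2 => u p.1 p.2) p ((1 : ℝ), (0 : E2)) := by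
      ext ⟨t, x⟩
      have h1 : HasFDerivAt (fun p : ℝ × E2 => u p.1 p.2) _ (t, x) :=
        (h.joint.differentiable (by simp) (t, x)).hasFDerivAt
      have h2 : HasDerivAt (fun s : ℝ => (s, x)) ((1 : ℝ), (0 : E2)) t :=
        (hasDerivAt_id t).prodMk (hasDerivAt_const t x)
      have h3 := h1.comp_hasDerivAt t h2
      exact (h.der t x).unique h3
    rw [this]
    exact hc.clm_apply continuous_const
  der := h.der
  L2 t := by
    have : du t = fun x => -Complex.I * cssRHS β R (u t) x := funext (h.du_eq t)
    rw [this]; exact (L2css β hR (u t)).const_mul' _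

lemma Sol.cont_u (h : Sol β R u du) (x : E2) : Continuous fun t => u t x :=
  h.joint.continuous.comp (by fun_prop : Continuous fun t : ℝ => (t, x))

lemma Sol.cont_dj (h : Sol β R u du) (j : Fin 2) (x : E2) : Continuous fun t => dj j (u t) x := by
  have hc := h.joint.continuous_fderiv (by simp)
  have : (fun t : ℝ => dj j (u t) x) =
      fun t => fderiv ℝ (fun p : ℝ × E2 => u p.1 p.2) (t, x) ((0 : ℝ), e2 j) := by
    ext t
    have h1 : HasFDerivAt (fun p : ℝ × E2 => u p.1 p.2) _ (t, x) :=
      (h.joint.differentiable (by simp) (t, x)).hasFDerivAt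
    have h2 : HasFDerivAt (fun y : E2 => (t, y)) (ContinuousLinearMap.inr ℝ ℝ E2) x :=
      hasFDerivAt_prodMk_right t x
    have h3 := h1.comp x h2
    have h4 : fderiv ℝ (u t) x = _ := h3.fderiv
    rw [dj, h4]; rfl
  rw [this]
  exact (hc.comp (by fun_prop : Continuous fun t : ℝ => (t, x))).clm_apply continuous_const

/-- bounded state -/
def BS (u : ℝ → SchwartzMap E2 ℂ) (du : ℝ → E2 → ℂ) (k : ℝ) (t : ℝ) : Prop := Bd k (u t) ∧ nn (du t) ≤ k

lemma BS.mono {k k' t : ℝ} (h : BS u du k t) (hk : k ≤ k') : BS u du k' t :=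
  ⟨bd_mono h.1 hk, h.2.trans hk⟩

lemma Sol.closed_BS (h : Sol β R u du) (hR : 0 < R) (k : ℝ) : IsClosed {t | BS u du k t} := by
  refine isClosed_of_closure_subset fun t ht => ?_
  have hne : (𝓝[{t | BS u du k t}] t).NeBot := mem_closure_iff_nhdsWithin_neBot.1 ht
  have hself : ∀ᶠ s in 𝓝[{t | BS u du k t}] t, BS u du k s := self_mem_nhdsWithin
  refine ⟨⟨?_, fun j => ?_⟩, ?_⟩
  · exact nn_fatou (l := 𝓝[{t | BS u du k t}] t) (f := fun s => u s) (hself.mono fun s hs => ⟨L2s _, hs.1.1⟩)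
      (fun x => (h.cont_u x).continuousAt.tendsto.mono_left nhdsWithin_le_nhds) (L2s _)
  · exact nn_fatou (l := 𝓝[{t | BS u du k t}] t) (f := fun s => dj j (u s)) (hself.mono fun s hs => ⟨L2d _ _, hs.1.2 j⟩)
      (fun x => (h.cont_dj j x).continuousAt.tendsto.mono_left nhdsWithin_le_nhds) (L2d _ _)
  · exact nn_fatou (l := 𝓝[{t | BS u du k t}] t) (f := fun s => du s) (hself.mono fun s hs => ⟨(h.fl hR).L2 s, hs.2⟩)
      (fun x => (((h.fl hR).cont.comp (by fun_prop : Continuous fun t : ℝ => (t, x))).continuousAt.tendsto.mono_left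
        nhdsWithin_le_nhds)) ((h.fl hR).L2 t)

lemma exists_BS (t : ℝ) : ∃ k : ℕ, BS u du k t := by
  obtain ⟨k, hk⟩ := exists_nat_ge (nn (u t) + nn (dj 0 (u t)) + nn (dj 1 (u t)) + nn (du t))
  have h0 := nn_nonneg (u t)
  have h1 := nn_nonneg (dj 0 (u t))
  have h2 := nn_nonneg (dj 1 (u t))
  have h3 := nn_nonneg (du t)
  refine ⟨k, ⟨by linarith, fun j => ?_⟩, by linarith⟩
  fin_cases j
  · simp; linarith
  · simp; linarith

/-- good times -/
def Good (u : ℝ → SchwartzMap E2 ℂ) (du : ℝ → E2 → ℂ) (t : ℝ) : Prop := ∃ M, ∀ᶠ z in 𝓝 t, BS u du M z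

lemma isOpen_good : IsOpen {t | Good u du t} := by
  rw [isOpen_iff_mem_nhds]
  rintro t ⟨M, hM⟩
  filter_upwards [eventually_eventually_nhds.2 hM] with z hz
  exact ⟨M, hz⟩

lemma ip_css_self (hR : 0 < R) (v : SchwartzMap E2 ℂ) : ip v (fun x => -Complex.I * cssRHS β R v x) = 0 := by
  have hi0 : Integrable (fun x => ((starRingEnd ℂ) (v x) * (Complex.I * lap v x)).re) :=
      (L2s v).int_ip ((L2lap v).const_mul' _)
  have hb : ∀ j, Integrable (fun x => Apot R v x j * dpf Complex.reCLM v v j x) := fun j =>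
    int_A_mul hR (L2s v).int_sq (dpf_int _ v v j) j
  have hi1 : Integrable (fun x => -β * (Apot R v x 0 * dpf Complex.reCLM v v 0 x + Apot R v x 1 * dpf Complex.reCLM v v 1 x)) :=
      (intadd (hb 0) (hb 1)).const_mul _
  have hd : ∫ x, (Apot R v x 0 * dpf Complex.reCLM v v 0 x + Apot R v x 1 * dpf Complex.reCLM v v 1 x) = 0 :=
    divA hR (L2s v).int_sq _ _ _
  have e : ip v (fun x => -Complex.I * cssRHS β R v x) = ip v (fun x => Complex.I * lap v x) +
      -β * ∫ x, (Apot R v x 0 * dpf Complex.reCLM v v 0 x + Apot R v x 1 * dpf Complex.reCLM v v 1 x) := by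
    unfold ip
    rw [← integral_const_mul, ← integral_add hi0 hi1]
    congr 1; ext x
    beta_reduce
    rw [css_eq]
    simp only [dpf, Complex.reCLM_apply]
    simp
    ring
  rw [e, hd, ip_I_lap]; simp

lemma Good.du_bdd {t : ℝ} (h : Good u du t) : ∃ M, ∀ᶠ z in 𝓝 t, nn (du z) ≤ M := by
  obtain ⟨M, hM⟩ := h
  exact ⟨M, hM.mono fun z hz => hz.2⟩

lemma Sol.mass (h : Sol β R u du) (hR : 0 < R) {a b : ℝ} (hG : ∀ t ∈ Set.Ioo a b, Good u du t)
    {s t : ℝ} (hs : s ∈ Set.Ioo a b) (ht : t ∈ Set.Ioo a b) : nn (u s) = nn (u t) := by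
  have hd : ∀ r ∈ Set.Ioo a b, HasDerivAt (fun s => nn (u s) ^ 2) 0 r := by
    intro r hr
    have h1 := (h.fl hR).deriv_sq (hG r hr).du_bdd
    have e : du r = fun x => -Complex.I * cssRHS β R (u r) x := funext (h.du_eq r)
    rw [e, ip_css_self hR, mul_zero] at h1
    exact h1
  have h2 := isOpen_Ioo.is_const_of_deriv_eq_zero isPreconnected_Ioo
    (fun r hr => (hd r hr).differentiableAt.differentiableWithinAt) (fun r hr => (hd r hr).deriv) hs ht
  exact (sq_eq_sq₀ (nn_nonneg _) (nn_nonneg _)).1 h2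

/-- lower Dini monotonicity -/
lemma dini_mono {f : ℝ → ℝ} {s t : ℝ} (hst : s ≤ t) (hf : ContinuousOn f (Set.Icc s t))
    (hd : ∀ r ∈ Set.Ico s t, ∀ ε > 0, ∀ᶠ z in 𝓝 r, f r - ε * |z - r| ≤ f z) : f s ≤ f t := by
  have key : ∀ ε > 0, f s ≤ f t + ε * (t - s) := by
    intro ε hε
    have := image_le_of_liminf_slope_right_lt_deriv_boundary (f := fun r => - f r) (f' := fun _ => 0)
      (a := s) (b := t) hf.neg ?_ (B := fun r => -f s + ε * (r - s)) (B' := fun _ => ε) (by simp) ?_ ?_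
      (x := t) ⟨hst, le_rfl⟩
    · linarith
    · intro r hr c hc
      refine Eventually.frequently ?_
      filter_upwards [self_mem_nhdsWithin, nhdsWithin_le_nhds (hd r hr (c / 2) (by positivity))] with z hz h1
      have hz' : 0 < z - r := sub_pos.2 hz
      rw [abs_of_pos hz'] at h1
      rw [slope_def_field, div_lt_iff₀ hz']
      nlinarith
    · intro r
      have := ((hasDerivAt_id r).sub_const s).const_mul ε
      simpa using this.const_add (-f s)
    · intro r _ _; exact hε
  refine le_of_forall_pos_le_add fun ε hε => ?_
  rcases hst.eq_or_lt with rfl | hlt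
  · linarith
  · have h1 := key (ε / (t - s)) (div_pos hε (by linarith))
    rwa [div_mul_cancel₀ _ (by linarith)] at h1

lemma dini_const {f : ℝ → ℝ} {a b : ℝ} (hf : ContinuousOn f (Set.Ioo a b))
    (hd : ∀ r ∈ Set.Ioo a b, ∀ ε > 0, ∀ᶠ z in 𝓝 r, f r - ε * |z - r| ≤ f z) {s t : ℝ}
    (hs : s ∈ Set.Ioo a b) (ht : t ∈ Set.Ioo a b) : f s = f t := by
  have key : ∀ s t, s ∈ Set.Ioo a b → t ∈ Set.Ioo a b → s ≤ t → f s = f t := by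
    intro s t hs ht hst
    have hsub : Set.Icc s t ⊆ Set.Ioo a b := fun r hr => ⟨hs.1.trans_le hr.1, hr.2.trans_lt ht.2⟩
    refine le_antisymm (dini_mono hst (hf.mono hsub) fun r hr => hd r (hsub ⟨hr.1, hr.2.le⟩)) ?_
    have h2 := dini_mono (f := fun r => f (-r)) (s := -t) (t := -s) (by linarith) ?_ ?_
    · simpa using h2
    · refine hf.comp continuous_neg.continuousOn fun r hr => hsub ⟨by linarith [hr.2], by linarith [hr.1]⟩
    · intro r hr ε hε
      have h3 := hd (-r) (hsub ⟨by linarith [hr.2], by linarith [hr.1]⟩) ε hε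
      have h4 : Tendsto (fun z : ℝ => -z) (𝓝 r) (𝓝 (-r)) := continuous_neg.tendsto r
      filter_upwards [h4.eventually h3] with z hz
      have : |-z - -r| = |z - r| := by rw [← abs_neg]; congr 1; ring
      rwa [this] at hz
  rcases le_total s t with hst | hst
  · exact key s t hs ht hst
  · exact (key t s ht hs hst).symm

lemma Sol.energy_const (h : Sol β R u du) (hR : 0 < R) {a b : ℝ} (hG : ∀ t ∈ Set.Ioo a b, Good u du t)
    {s t : ℝ} (hs : s ∈ Set.Ioo a b) (ht : t ∈ Set.Ioo a b) :
    energy β R (u s) = energy β R (u t) := by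
  refine dini_const (f := fun r => energy β R (u r)) (a := a) (b := b) ?_ ?_ hs ht
  · intro r hr
    refine ContinuousAt.continuousWithinAt ?_
    obtain ⟨M, hM⟩ := hG r hr
    obtain ⟨C, hC, hE⟩ := energyLow β hR M
    have hq := (h.fl hR).quot (hM.mono fun z hz => hz.2)
    have hr0 := hM.self_of_nhds
    have hM0 : 0 ≤ M := hr0.1.nonneg
    have hlim : Tendsto (fun z => 2 * (M * (M * |z - r|)) + C * (M * |z - r|) ^ 2) (𝓝 r) (𝓝 0) := by
      have : Tendsto (fun z => 2 * (M * (M * |z - r|)) + C * (M * |z - r|) ^ 2) (𝓝 r)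
        (𝓝 (2 * (M * (M * |r - r|)) + C * (M * |r - r|) ^ 2)) := by
        apply Continuous.tendsto; fun_prop
      simpa using this
    rw [ContinuousAt, tendsto_iff_dist_tendsto_zero]
    refine squeeze_zero' (Eventually.of_forall fun z => dist_nonneg) ?_ hlim
    filter_upwards [hM, hq] with z hz hqz
    rw [Real.dist_eq]
    have key : ∀ p q : ℝ, BS u du M p → BS u du M q → nn (⇑(u p - u q)) ≤ M * |z - r| →
        energy β R (u q) ≤ energy β R (u p) + (2 * (M * (M * |z - r|)) + C * (M * |z - r|) ^ 2) := by
      intro p q hp hq hpq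
      have h1 := hE (u p) (u q) hp.1.1 hq.1
      have h2 := (abs_le.1 (abs_ip_le (L2css β hR (u q)) (L2s (u p - u q)))).1
      have h3 : nn (cssRHS β R (u q)) * nn (⇑(u p - u q)) ≤ M * (M * |z - r|) := by
        rw [h.nn_css]
        have := nn_nonneg (⇑(u p - u q))
        exact mul_le_mul hq.2 hpq this hM0
      have h0 := nn_nonneg (⇑(u p - u q))
      have h4 : C * nn (⇑(u p - u q)) ^ 2 ≤ C * (M * |z - r|) ^ 2 := by gcongr
      linarith
    have k1 := key z r hz hr0 hqz
    have k2 := key r z hr0 hz (by rw [nn_sub_comm]; exact hqz)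
    rw [abs_le]
    constructor <;> linarith
  · intro r hr ε hε
    obtain ⟨M, hM⟩ := hG r hr
    obtain ⟨C, hC, hE⟩ := energyLow β hR M
    have hdu := hM.mono fun z hz => hz.2
    have hq := (h.fl hR).quot hdu
    have hr0 := hM.self_of_nhds
    have hM0 : 0 ≤ M := hr0.1.nonneg
    have hw := (h.fl hR).weak hdu (L2css β hR (u r))
    have hzero : ip (cssRHS β R (u r)) (du r) = 0 := by
      rw [h.css, ip_comm, ip_I_self]
    rw [hzero] at hw
    have hw' : ∀ᶠ z in 𝓝[≠] r, |(z - r)⁻¹ * ip (cssRHS β R (u r)) (⇑(u z - u r))| < ε / 4 := by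
      have := hw.abs
      rw [abs_zero] at this
      exact this.eventually (gt_mem_nhds (by positivity))
    rw [eventually_nhdsWithin_iff] at hw'
    have hsm : ∀ᶠ z in 𝓝 r, C * M ^ 2 * |z - r| < ε / 2 := by
      have : Tendsto (fun z => C * M ^ 2 * |z - r|) (𝓝 r) (𝓝 (C * M ^ 2 * |r - r|)) := by
        apply Continuous.tendsto; fun_prop
      simp only [sub_self, abs_zero, mul_zero] at this
      exact this.eventually (gt_mem_nhds (by positivity))
    filter_upwards [hM, hq, hw', hsm] with z hz hqz hwz hsz
    rcases eq_or_ne z r with rfl | hne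
    · simp
    have hwz := hwz hne
    have hpos : 0 < |z - r| := abs_pos.2 (sub_ne_zero.2 hne)
    rw [abs_mul, abs_inv, inv_mul_lt_iff₀ hpos] at hwz
    have h1 := hE (u z) (u r) hz.1.1 hr0.1
    have h2 := (abs_lt.1 hwz).1
    have h0 := nn_nonneg (⇑(u z - u r))
    have h4 : C * nn (⇑(u z - u r)) ^ 2 ≤ C * (M * |z - r|) ^ 2 := by gcongr
    have h5 : C * (M * |z - r|) ^ 2 = (C * M ^ 2 * |z - r|) * |z - r| := by ring
    have h6 : (C * M ^ 2 * |z - r|) * |z - r| ≤ ε / 2 * |z - r| := by gcongr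
    nlinarith

end S

/-! ### Propagation of regularity -/

section S2
open Filter Topology
variable {β R : ℝ} {u : ℝ → SchwartzMap E2 ℂ} {du : ℝ → E2 → ℂ}

lemma Fl.sub_const (h : Fl u du) (g : SchwartzMap E2 ℂ) : Fl (fun r => u r - g) du where
  cont := h.cont
  der t x := by
    have := (h.der t x).sub_const (g x)
    simpa only [sub_apply] using this
  L2 := h.L2

lemma Fl.shift (h : Fl u du) (c : ℝ) : Fl (fun r => u (r + c) - u r) (fun r x => du (r + c) x - du r x) where
  cont := (h.cont.comp (by fun_prop : Continuous fun p : ℝ × E2 => (p.1 + c, p.2))).sub h.cont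
  der t x := by
    have h1 : HasDerivAt (fun s => u (s + c) x - u s x) (du (t + c) x - du t x) t :=
      ((h.der (t + c) x).comp_add_const t c).sub (h.der t x)
    simpa only [sub_apply] using h1
  L2 t := (h.L2 (t + c)).sub (h.L2 t)

/-- stability constant -/
def Stab (β R M C : ℝ) : Prop := 0 ≤ C ∧ ∀ u v : SchwartzMap E2 ℂ, Bd M u → Bd M v →
    |ip (⇑(u - v)) (fun x => -Complex.I * (cssRHS β R u x - cssRHS β R v x))| ≤ C * nn (⇑(u - v)) ^ 2

lemma Sol.stepA (h : Sol β R u du) (hR : 0 < R) {a b e M C : ℝ} (hS : Stab β R M C)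
    (hG : ∀ t ∈ Set.Ioo a b, Good u du t) (hab : a < b) (he : e ∈ Set.Icc a b)
    (hB : ∀ t ∈ Set.Ioo a b, Bd M (u t)) (hBe : Bd M (u e))
    (hlim : Tendsto (fun t => nn (⇑(u t - u e))) (𝓝[Set.Ioo a b] e) (𝓝 0))
    {t : ℝ} (ht : t ∈ Set.Ioo a b) (hte : 8 * C * |t - e| < 1) :
    nn (⇑(u t - u e)) ≤ 3 * nn (du e) * |t - e| := by
  have hρ := nn_nonneg (du e)
  have hne : (𝓝[Set.Ioo a b] e).NeBot := by
    rw [← mem_closure_iff_nhdsWithin_neBot, closure_Ioo hab.ne]; exact he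
  have hfl := (h.fl hR).sub_const (u e)
  have hc : Tendsto (fun s => 8 * C * |t - s|) (𝓝[Set.Ioo a b] e) (𝓝 (8 * C * |t - e|)) := by
    refine Tendsto.mono_left ?_ nhdsWithin_le_nhds
    apply Continuous.tendsto (f := fun s => 8 * C * |t - s|); fun_prop
  have key : ∀ᶠ s in 𝓝[Set.Ioo a b] e,
      nn (⇑(u t - u e)) ^ 2 ≤ 2 * nn (⇑(u s - u e)) ^ 2 + 8 * |t - s| ^ 2 * nn (du e) ^ 2 := by
    filter_upwards [self_mem_nhdsWithin, hc.eventually (gt_mem_nhds hte)] with s hs hlt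
    have hsub : Set.uIcc s t ⊆ Set.Ioo a b := Set.ordConnected_Ioo.uIcc_subset hs ht
    refine gron (F := fun r => nn (⇑(u r - u e)) ^ 2) (F' := fun r => 2 * ip (⇑(u r - u e)) (du r))
      (fun r => sq_nonneg _) hS.1 (fun r hr => hfl.deriv_sq (hG r (hsub hr)).du_bdd) ?_ hρ hlt.le
    intro r hr
    have h1 := hS.2 (u r) (u e) (hB r (hsub hr)) hBe
    have hL : L2f (fun x => -Complex.I * (cssRHS β R (u r) x - cssRHS β R (u e) x)) :=
      ((L2css β hR (u r)).sub (L2css β hR (u e))).const_mul' _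
    have e1 : du r = fun x => -Complex.I * (cssRHS β R (u r) x - cssRHS β R (u e) x) + du e x := by
      ext x; rw [h.du_eq r, h.du_eq e]; ring
    have h2 := abs_ip_le (L2s (u r - u e)) ((h.fl hR).L2 e)
    rw [e1, ip_add_right (L2s (u r - u e)) hL ((h.fl hR).L2 e), Real.sqrt_sq (nn_nonneg _), abs_mul, abs_two]
    have h3 := abs_add_le (ip (⇑(u r - u e)) (fun x => -Complex.I * (cssRHS β R (u r) x - cssRHS β R (u e) x)))
      (ip (⇑(u r - u e)) (du e))
    nlinarith
  have hlim2 : Tendsto (fun s => 2 * nn (⇑(u s - u e)) ^ 2 + 8 * |t - s| ^ 2 * nn (du e) ^ 2) (𝓝[Set.Ioo a b] e)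
      (𝓝 (2 * 0 ^ 2 + 8 * |t - e| ^ 2 * nn (du e) ^ 2)) := by
    refine ((hlim.pow 2).const_mul 2).add ?_
    refine Tendsto.mono_left ?_ nhdsWithin_le_nhds
    apply Continuous.tendsto (f := fun s => 8 * |t - s| ^ 2 * nn (du e) ^ 2); fun_prop
  have hfin := ge_of_tendsto hlim2 key
  refine le_of_sq_le_sq ?_ (by positivity)
  nlinarith [sq_nonneg (|t - e| * nn (du e))]

lemma Sol.stepB (h : Sol β R u du) (hR : 0 < R) {a b e M C : ℝ} (hS : Stab β R M C)
    (hG : ∀ t ∈ Set.Ioo a b, Good u du t) (hab : a < b) (he : e ∈ Set.Icc a b)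
    (hB : ∀ t ∈ Set.Ioo a b, Bd M (u t)) (hBe : Bd M (u e))
    (hlim : Tendsto (fun t => nn (⇑(u t - u e))) (𝓝[Set.Ioo a b] e) (𝓝 0))
    {t : ℝ} (ht : t ∈ Set.Ioo a b) (hte : 8 * C * |t - e| < 1) :
    nn (du t) ≤ 9 * nn (du e) := by
  have hρ := nn_nonneg (du e)
  obtain ⟨c, hc, hcI, hcI'⟩ : ∃ c : ℝ, |c| + |c + 1| = 2 ∧ (∀ᶠ y in 𝓝[>] (0 : ℝ), e + c * y ∈ Set.Ioo a b) ∧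
      (∀ᶠ y in 𝓝[>] (0 : ℝ), e + c * y + y ∈ Set.Ioo a b) := by
    rcases he.2.eq_or_lt with heb | heb
    · have hm : ∀ᶠ y in 𝓝[>] (0 : ℝ), y < (b - a) / 2 :=
        nhdsWithin_le_nhds (gt_mem_nhds (by linarith))
      refine ⟨-3 / 2, by norm_num [abs_of_neg], ?_, ?_⟩
      all_goals
        filter_upwards [self_mem_nhdsWithin, hm] with y hy hy2
        have hy' : 0 < y := hy
        constructor <;> linarith
    · have hm : ∀ᶠ y in 𝓝[>] (0 : ℝ), y < (b - e) / 2 :=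
        nhdsWithin_le_nhds (gt_mem_nhds (by linarith))
      refine ⟨1 / 2, by norm_num, ?_, ?_⟩
      all_goals
        filter_upwards [self_mem_nhdsWithin, hm] with y hy hy2
        have hy' : 0 < y := hy
        constructor <;> linarith [he.1]
  have hev : ∀ f : ℝ → ℝ, Continuous f → f 0 < 1 → ∀ᶠ y in 𝓝[>] (0 : ℝ), f y < 1 := fun f hf h0 =>
    nhdsWithin_le_nhds (hf.continuousAt.eventually (gt_mem_nhds h0))
  have e1 := hev (fun y => 8 * C * |t - (e + c * y)|) (by fun_prop) (by simpa using hte)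
  have e2 := hev (fun y => 8 * C * |e + c * y - e|) (by fun_prop) (by simp)
  have e3 := hev (fun y => 8 * C * |e + c * y + y - e|) (by fun_prop) (by simp)
  have e4 : ∀ᶠ y in 𝓝[>] (0 : ℝ), t + y ∈ Set.Ioo a b := by
    have : Continuous fun y : ℝ => t + y := by fun_prop
    exact nhdsWithin_le_nhds (this.continuousAt.eventually (isOpen_Ioo.mem_nhds (by simpa using ht)))
  refine nn_fatou (l := 𝓝[>] (0 : ℝ)) (f := fun y x => (((y)⁻¹ : ℝ) : ℂ) * (u (t + y) - u t) x) ?_ ?_ ((h.fl hR).L2 t)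
  · filter_upwards [self_mem_nhdsWithin, hcI, hcI', e1, e2, e3, e4] with y hy hs hsy hl1 hl2 hl3 hty
    have hy' : 0 < y := hy
    refine ⟨(L2s _).const_mul' _, ?_⟩
    rw [nn_const_mul, Complex.norm_real, norm_inv, Real.norm_of_nonneg hy'.le, inv_mul_le_iff₀ hy']
    set s := e + c * y with hsdef
    have hsub : Set.uIcc s t ⊆ Set.Ioo a b := Set.ordConnected_Ioo.uIcc_subset hs ht
    have hsub' : ∀ r ∈ Set.uIcc s t, r + y ∈ Set.Ioo a b := by
      intro r hr
      have h1 := hsub hr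
      rcases Set.mem_uIcc.1 hr with h2 | h2
      · exact ⟨by linarith [h1.1], by linarith [hty.2]⟩
      · exact ⟨by linarith [h1.1], by linarith [hsy.2]⟩
    have hfl := (h.fl hR).shift y
    have hg := gron (F := fun r => nn (⇑(u (r + y) - u r)) ^ 2) (s := s) (t := t) (C := C) (ρ := 0)
      (F' := fun r => 2 * ip (⇑(u (r + y) - u r)) (fun x => du (r + y) x - du r x))
      (fun r => sq_nonneg _) hS.1 (fun r hr => hfl.deriv_sq ?_) ?_ le_rfl hl1.le
    · have hA1 := h.stepA hR hS hG hab he hB hBe hlim hs hl2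
      have hA2 := h.stepA hR hS hG hab he hB hBe hlim hsy hl3
      have h1 : nn (⇑(u (s + y) - u s)) ≤ 6 * nn (du e) * y := by
        have h2 := nn_sub_le (L2s (u (s + y) - u e)) (L2s (u s - u e))
        have ee : (fun x => (u (s + y) - u e) x - (u s - u e) x) = ⇑(u (s + y) - u s) := by
          ext x; rw [sub_apply, sub_apply, sub_apply]; ring
        rw [ee] at h2
        have a1 : |s - e| = |c| * y := by
          rw [hsdef, add_sub_cancel_left, abs_mul, abs_of_pos hy']
        have a2 : |s + y - e| = |c + 1| * y := by
          rw [hsdef, show e + c * y + y - e = (c + 1) * y by ring, abs_mul, abs_of_pos hy']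
        rw [a1] at hA1
        rw [a2] at hA2
        have : 3 * nn (du e) * (|c| * y) + 3 * nn (du e) * (|c + 1| * y) = 3 * nn (du e) * y * 2 := by
          rw [← hc]; ring
        linarith
      refine le_of_sq_le_sq ?_ (by positivity)
      have h0 := nn_nonneg (⇑(u (s + y) - u s))
      have h3 : nn (⇑(u (s + y) - u s)) ^ 2 ≤ (6 * nn (du e) * y) ^ 2 := by gcongr
      nlinarith [sq_nonneg (nn (du e) * y)]
    · obtain ⟨M1, hM1⟩ := (hG r (hsub hr)).du_bdd
      obtain ⟨M2, hM2⟩ := (hG (r + y) (hsub' r hr)).du_bdd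
      have ht2 : Tendsto (fun z => z + y) (𝓝 r) (𝓝 (r + y)) := by
        apply Continuous.tendsto (f := fun z => z + y); fun_prop
      refine ⟨M2 + M1, ?_⟩
      filter_upwards [hM1, ht2.eventually hM2] with z hz1 hz2
      exact (nn_sub_le ((h.fl hR).L2 _) ((h.fl hR).L2 _)).trans (add_le_add hz2 hz1)
    · intro r hr
      have h1 := hS.2 (u (r + y)) (u r) (hB _ (hsub' r hr)) (hB r (hsub hr))
      have e1 : (fun x => du (r + y) x - du r x) =
          fun x => -Complex.I * (cssRHS β R (u (r + y)) x - cssRHS β R (u r) x) := by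
        ext x; rw [h.du_eq (r + y), h.du_eq r]; ring
      rw [e1, abs_mul, abs_two]
      simp only [mul_zero, zero_mul, add_zero]
      linarith
  · intro x
    have h1 := (h.der t x).tendsto_slope
    have h2 : Tendsto (fun y : ℝ => t + y) (𝓝[>] 0) (𝓝[≠] t) := by
      refine tendsto_nhdsWithin_iff.2 ⟨?_, ?_⟩
      · have : Continuous fun y : ℝ => t + y := by fun_prop
        have := this.tendsto 0
        rw [add_zero] at this
        exact this.mono_left nhdsWithin_le_nhds
      · filter_upwards [self_mem_nhdsWithin] with y hy
        have hy' : 0 < y := hy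
        simp [hy'.ne']
    refine (h1.comp h2).congr fun y => ?_
    simp only [Function.comp]
    rw [slope_def_module, sub_apply, Complex.real_smul, add_sub_cancel_left]

end S2

section S3
open Filter Topology
variable {β R : ℝ} {u : ℝ → SchwartzMap E2 ℂ} {du : ℝ → E2 → ℂ}

lemma Sol.limit (h : Sol β R u du) (hR : 0 < R) {a b e k : ℝ}
    (hG : ∀ t ∈ Set.Ioo a b, Good u du t) (hab : a < b) (he : e ∈ Set.Icc a b) :
    ∃ M2 M1 : ℝ, 0 ≤ M2 ∧ k ≤ M1 ∧ (∀ t ∈ Set.Ioo a b, Bd M1 (u t)) ∧ ∀ᶠ t in 𝓝[Set.Ioo a b] e,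
      nn (du t) ≤ M2 ∧ nn (⇑(u t - u e)) ≤ M2 * |t - e| := by
  have hne : (𝓝[Set.Ioo a b] e).NeBot := by
    rw [← mem_closure_iff_nhdsWithin_neBot, closure_Ioo hab.ne]; exact he
  have hc0 : (a + b) / 2 ∈ Set.Ioo a b := ⟨by linarith, by linarith⟩
  set c0 := (a + b) / 2
  set M1 := nn (u c0) + (√(energy β R (u c0)) + |β| * R⁻¹ * nn (u c0) ^ 3) + |k| with hM1
  have hB : ∀ t ∈ Set.Ioo a b, Bd M1 (u t) := by
    intro t ht
    have h1 := coercive β hR (u t)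
    rw [h.mass hR hG ht hc0, h.energy_const hR hG ht hc0] at h1
    exact bd_mono h1 (by rw [hM1]; linarith [abs_nonneg k])
  have hkM : k ≤ M1 := by
    have h1 := (coercive β hR (u c0)).nonneg
    rw [hM1]; linarith [le_abs_self k]
  obtain ⟨C, hS⟩ := stab β hR M1
  have hC := hS.1
  set δ := 1 / (16 * C + 1) with hδ
  have hδ0 : 0 < δ := by positivity
  have hδ1 : ∀ r : ℝ, r < δ → 0 ≤ r → 16 * C * r < 1 ∨ r = 0 := by
    intro r hr h0
    left
    rw [hδ, lt_div_iff₀ (by positivity)] at hr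
    rcases h0.eq_or_lt with h0 | h0
    · rw [← h0]; norm_num
    · nlinarith
  have hδ2 : ∀ r ∈ Metric.ball e δ, 16 * C * |r - e| < 1 := by
    intro r hr
    rw [Metric.mem_ball, Real.dist_eq] at hr
    rcases hδ1 _ hr (abs_nonneg _) with h1 | h1
    · exact h1
    · rw [h1]; norm_num
  set D := Set.Ioo a b ∩ Metric.ball e δ with hD
  have hDmem : D ∈ 𝓝[Set.Ioo a b] e := by
    rw [hD]
    exact inter_mem self_mem_nhdsWithin (nhdsWithin_le_nhds (Metric.ball_mem_nhds e hδ0))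
  have hDo : D.OrdConnected := by
    rw [hD, Real.ball_eq_Ioo]; exact Set.ordConnected_Ioo.inter Set.ordConnected_Ioo
  obtain ⟨s, hs⟩ := hne.nonempty_of_mem hDmem
  obtain ⟨Ms, hMs⟩ := (hG s hs.1).du_bdd
  have hq := (h.fl hR).quot hMs
  have hlims : Tendsto (fun t => nn (⇑(u t - u s))) (𝓝[Set.Ioo a b] s) (𝓝 0) := by
    have h1 : Tendsto (fun z => Ms * |z - s|) (𝓝 s) (𝓝 (Ms * |s - s|)) := by
      apply Continuous.tendsto (f := fun z => Ms * |z - s|); fun_prop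
    rw [sub_self, abs_zero, mul_zero] at h1
    exact (squeeze_zero' (Eventually.of_forall fun z => nn_nonneg _) hq h1).mono_left nhdsWithin_le_nhds
  have hdu : ∀ t ∈ D, nn (du t) ≤ 9 * nn (du s) := by
    intro t ht
    refine h.stepB hR hS hG hab ⟨hs.1.1.le, hs.1.2.le⟩ hB (hB s hs.1) hlims ht.1 ?_
    have h1 := hδ2 t ht.2
    have h2 := hδ2 s hs.2
    have h3 : |t - s| ≤ |t - e| + |s - e| := by
      have := abs_sub_le t e s
      rwa [abs_sub_comm e s] at this
    nlinarith
  refine ⟨9 * nn (du s), M1, by have := nn_nonneg (du s); positivity, hkM, hB, ?_⟩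
  filter_upwards [hDmem] with t ht
  refine ⟨hdu t ht, ?_⟩
  refine le_of_forall_pos_le_add fun ε hε => ?_
  have hc : Tendsto (fun s' => 9 * nn (du s) * |t - s'|) (𝓝[Set.Ioo a b] e) (𝓝 (9 * nn (du s) * |t - e|)) := by
    refine Tendsto.mono_left ?_ nhdsWithin_le_nhds
    apply Continuous.tendsto (f := fun s' => 9 * nn (du s) * |t - s'|); fun_prop
  refine nn_fatou (l := 𝓝[Set.Ioo a b] e) (f := fun s' => ⇑(u t - u s')) ?_ ?_ (L2s _)
  · filter_upwards [hDmem, hc.eventually (gt_mem_nhds (lt_add_of_pos_right _ hε))] with s' hs' hlt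
    refine ⟨L2s _, le_trans ?_ hlt.le⟩
    exact (h.fl hR).lip fun r hr => hdu r (hDo.uIcc_subset hs' ht hr)
  · intro x
    simp only [sub_apply]
    exact ((h.cont_u x).continuousAt.tendsto.mono_left nhdsWithin_le_nhds).const_sub _

lemma Sol.prop (h : Sol β R u du) (hR : 0 < R) (k : ℝ) (hk : 0 ≤ k) : ∃ l > 0, ∃ K : ℝ, ∀ a b e : ℝ, a < b →
    (∀ t ∈ Set.Ioo a b, Good u du t) → e ∈ Set.Icc a b → BS u du k e →
    ∀ t ∈ Set.Ioo a b, |t - e| < l → BS u du K t := by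
  set E1 := 2 * (k + |β| * R⁻¹ * k ^ 3) ^ 2 with hE1
  set K1 := k + (√E1 + |β| * R⁻¹ * k ^ 3) with hK1
  have hRi : 0 < R⁻¹ := by positivity
  have hkK : k ≤ K1 := by
    have : 0 ≤ √E1 + |β| * R⁻¹ * k ^ 3 := by positivity
    rw [hK1]; linarith
  obtain ⟨C, hS⟩ := stab β hR K1
  have hC := hS.1
  refine ⟨1 / (8 * C + 1), by positivity, max K1 (9 * k), fun a b e hab hG he hBe t ht hte => ?_⟩
  have hne : (𝓝[Set.Ioo a b] e).NeBot := by
    rw [← mem_closure_iff_nhdsWithin_neBot, closure_Ioo hab.ne]; exact he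
  obtain ⟨M2, M1, hM2, hkM, hB1, hev⟩ := h.limit hR (k := k) hG hab he
  have habs : ∀ c : ℝ, Tendsto (fun z => c * |z - e|) (𝓝[Set.Ioo a b] e) (𝓝 0) := by
    intro c
    have h1 : Tendsto (fun z => c * |z - e|) (𝓝 e) (𝓝 (c * |e - e|)) := by
      apply Continuous.tendsto (f := fun z => c * |z - e|); fun_prop
    rw [sub_self, abs_zero, mul_zero] at h1
    exact h1.mono_left nhdsWithin_le_nhds
  have hlim : Tendsto (fun t => nn (⇑(u t - u e))) (𝓝[Set.Ioo a b] e) (𝓝 0) :=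
    squeeze_zero' (Eventually.of_forall fun z => nn_nonneg _) (hev.mono fun z hz => hz.2) (habs M2)
  have hmass : ∀ t ∈ Set.Ioo a b, nn (u t) ≤ k := by
    intro t ht
    have h1 : Tendsto (fun z => k + nn (⇑(u z - u e))) (𝓝[Set.Ioo a b] e) (𝓝 (k + 0)) := hlim.const_add k
    rw [add_zero] at h1
    refine ge_of_tendsto h1 ?_
    filter_upwards [self_mem_nhdsWithin] with z hz
    rw [h.mass hR hG ht hz]
    have h2 := nn_add_le (L2s (u e)) (L2s (u z - u e))
    have ee : (fun x => u e x + (u z - u e) x) = u z := by ext x; rw [sub_apply]; ring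
    rw [ee] at h2
    linarith [hBe.1.1]
  have hen : ∀ t ∈ Set.Ioo a b, energy β R (u t) ≤ E1 := by
    intro t ht
    refine le_trans ?_ (energy_le β hR (u e) hBe.1)
    obtain ⟨C', hC', hE⟩ := energyLow β hR M1
    have h1 : Tendsto (fun z => energy β R (u e) + (2 * (M2 * (M2 * |z - e|)) + C' * (M2 * |z - e|) ^ 2))
        (𝓝[Set.Ioo a b] e) (𝓝 (energy β R (u e) + (2 * (M2 * 0) + C' * 0 ^ 2))) :=
      ((((habs M2).const_mul M2).const_mul 2).add (((habs M2).pow 2).const_mul C')).const_add _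
    simp only [mul_zero, add_zero, ne_eq, OfNat.ofNat_ne_zero, not_false_eq_true, zero_pow] at h1
    refine ge_of_tendsto h1 ?_
    filter_upwards [self_mem_nhdsWithin, hev] with z hz hzz
    rw [h.energy_const hR hG ht hz]
    have h3 := hE (u e) (u z) (hBe.1.1.trans hkM) (hB1 z hz)
    have h4 := (abs_le.1 (abs_ip_le (L2css β hR (u z)) (L2s (u e - u z)))).1
    rw [h.nn_css] at h4
    rw [nn_sub_comm (u e) (u z)] at h3 h4
    have h0 := nn_nonneg (⇑(u z - u e))
    have h5 : nn (du z) * nn (⇑(u z - u e)) ≤ M2 * (M2 * |z - e|) := mul_le_mul hzz.1 hzz.2 h0 hM2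
    have h6 : C' * nn (⇑(u z - u e)) ^ 2 ≤ C' * (M2 * |z - e|) ^ 2 := by
      have := hzz.2
      gcongr
    linarith
  have hB : ∀ t ∈ Set.Ioo a b, Bd K1 (u t) := by
    intro t ht
    refine bd_mono (coercive β hR (u t)) ?_
    have h1 := hmass t ht
    have h2 := hen t ht
    have h3 := nn_nonneg (u t)
    rw [hK1]
    gcongr
  refine ⟨bd_mono (hB t ht) (le_max_left _ _), ?_⟩
  refine le_trans (h.stepB hR hS hG hab he hB (bd_mono hBe.1 hkK) hlim ht ?_) ?_
  · rw [lt_div_iff₀ (by positivity)] at hte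
    rcases (abs_nonneg (t - e)).eq_or_lt with h0 | h0
    · rw [← h0]; norm_num
    · nlinarith
  · exact le_trans (by linarith [hBe.2]) (le_max_right _ _)

lemma Sol.all_good (h : Sol β R u du) (hR : 0 < R) (t : ℝ) : Good u du t := by
  by_contra hbad
  set B : Set ℝ := {t | Good u du t}ᶜ with hBdef
  have hBc : IsClosed B := isOpen_good.isClosed_compl
  have : CompleteSpace B := hBc.completeSpace_coe
  have : Nonempty B := ⟨⟨t, hbad⟩⟩
  obtain ⟨n, p, hp⟩ := nonempty_interior_of_iUnion_of_closed (X := B)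
    (f := fun n : ℕ => {x : B | BS u du n x}) (fun n => (h.closed_BS hR n).preimage continuous_subtype_val)
    (by
      rw [Set.eq_univ_iff_forall]
      intro x
      obtain ⟨n, hn⟩ := exists_BS (u := u) (du := du) (x : ℝ)
      exact Set.mem_iUnion.2 ⟨n, hn⟩)
  rw [mem_interior_iff_mem_nhds, Metric.mem_nhds_iff] at hp
  obtain ⟨ε, hε, hsub⟩ := hp
  have hBS : ∀ z ∈ B, |z - p| < ε → BS u du n z := fun z hz hd =>
    hsub (show (⟨z, hz⟩ : B) ∈ Metric.ball p ε by rw [Metric.mem_ball, Subtype.dist_eq, Real.dist_eq]; exact hd)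
  obtain ⟨l, hl, K, hK⟩ := h.prop hR n (Nat.cast_nonneg n)
  have hpB : (p : ℝ) ∈ B := p.2
  refine hpB ⟨max K n, ?_⟩
  refine Metric.eventually_nhds_iff_ball.2 ⟨min ε l, lt_min hε hl, fun z hz => ?_⟩
  rw [Metric.mem_ball, Real.dist_eq, lt_min_iff] at hz
  by_cases hzB : z ∈ B
  · exact (hBS z hzB hz.1).mono (le_max_right _ _)
  refine BS.mono ?_ (le_max_left K n)
  have hzG : Good u du z := not_not.1 hzB
  obtain ⟨η, hη, hball⟩ := Metric.isOpen_iff.1 isOpen_good z hzG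
  rw [Real.ball_eq_Ioo] at hball
  rcases lt_or_ge z p with hzp | hzp
  · -- nearest bad point to the right
    obtain ⟨e, heB, hemin⟩ : ∃ e ∈ B ∩ Set.Icc z p, ∀ y ∈ B ∩ Set.Icc z p, e ≤ y :=
      ((isCompact_Icc.inter_left hBc).exists_isLeast ⟨p, hpB, hzp.le, le_rfl⟩).imp fun e he => ⟨he.1, fun y hy => he.2 hy⟩
    have hze : z < e := lt_of_le_of_ne heB.2.1 (by rintro rfl; exact hzB heB.1)
    have d1 : |z - p| = p - z := by rw [abs_of_neg (by linarith)]; ring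
    have d2 : |z - e| = e - z := by rw [abs_of_neg (by linarith)]; ring
    have d3 : |e - p| ≤ p - z := by rw [abs_le]; constructor <;> linarith [heB.2.2]
    refine hK (z - η) e e (by linarith) ?_ ⟨by linarith, le_rfl⟩ (hBS e heB.1 (by linarith [hz.1])) z ⟨by linarith, hze⟩
      (by linarith [hz.2, heB.2.2])
    intro r hr
    rcases lt_or_ge r z with hrz | hrz
    · exact hball ⟨hr.1, by linarith⟩
    · by_contra hng
      have := hemin r ⟨hng, hrz, by linarith [hr.2, heB.2.2]⟩
      linarith [hr.2]
  · obtain ⟨e, heB, hemax⟩ : ∃ e ∈ B ∩ Set.Icc p z, ∀ y ∈ B ∩ Set.Icc (p : ℝ) z, y ≤ e :=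
      ((isCompact_Icc.inter_left hBc).exists_isGreatest ⟨p, hpB, le_rfl, hzp⟩).imp fun e he => ⟨he.1, fun y hy => he.2 hy⟩
    have hze : e < z := lt_of_le_of_ne heB.2.2 (by rintro rfl; exact hzB heB.1)
    have d1 : |z - p| = z - p := abs_of_nonneg (by linarith)
    have d2 : |z - e| = z - e := abs_of_pos (by linarith)
    have d3 : |e - p| ≤ z - p := by rw [abs_le]; constructor <;> linarith [heB.2.1]
    refine hK e (z + η) e (by linarith) ?_ ⟨le_rfl, by linarith⟩ (hBS e heB.1 (by linarith [hz.1])) z ⟨hze, by linarith⟩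
      (by linarith [hz.2, heB.2.1])
    intro r hr
    rcases lt_or_ge z r with hrz | hrz
    · exact hball ⟨by linarith, hr.2⟩
    · by_contra hng
      have := hemax r ⟨hng, by linarith [hr.1, heB.2.1], hrz⟩
      linarith [hr.1]

end S3

/-- Theorem 3.1, eq. (3.3) (conservation of energy for the regularized CSS equation):
if `u` is a jointly smooth, Schwartz-in-space solution of
`i∂ₜu = −Δu − 2iβ A·∇u + β²‖A‖²u − β(K_R ∗ (2βA|u|² + J[u]))u`, `A = K_R ∗ |u|²`,
then `E(t) = ∫ ‖−i∇u + βAu‖²` is constant in time. -/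
theorem statement13 (β R : ℝ) (hR : 0 < R) (u : ℝ → SchwartzMap E2 ℂ) (du : ℝ → E2 → ℂ)
    (hjoint : ContDiff ℝ (⊤ : ℕ∞) fun p : ℝ × E2 => u p.1 p.2)
    (hderiv : ∀ t x, HasDerivAt (fun s => u s x) (du t x) t)
    (hpde : ∀ t x, Complex.I * du t x = cssRHS β R (⇑(u t)) x) :
    ∀ t : ℝ, energy β R (⇑(u t)) = energy β R (⇑(u 0)) := by
  intro t
  have h : Sol β R u du := ⟨hjoint, hderiv, hpde⟩
  have ht : t ∈ Set.Ioo (-(|t| + 1)) (|t| + 1) := by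
    have := abs_le.1 (le_refl |t|)
    exact ⟨by linarith [this.1], by linarith [this.2]⟩
  have h0 : (0 : ℝ) ∈ Set.Ioo (-(|t| + 1)) (|t| + 1) := by
    have := abs_nonneg t
    exact ⟨by linarith, by linarith⟩
  exact h.energy_const hR (fun r _ => h.all_good hR r) ht h0
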